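/- arXiv:2006.16456 — 2 statements merged into one kernel-verified Lean document; each statement's English description precedes it below -/
import Mathlib

section
/- (Max balance I) For every Borel set Γ ⊆ S, the max flux out of the interior of Γ is dominated by the max flux into its closure: Φ_ρ(int Γ, int(S∖Γ)) ≤ Φ_ρ(cl(S∖Γ), cl Γ). -/
open Filter Topology Metric Set MeasureTheory
open scoped NNReal

noncomputable section

/-- A deviability density on a topological space `E`. -/
def IsDeviabilityDensity {E : Type*} [TopologicalSpace E] (p : E → ℝ) : Prop :=
  (∀ x, p x ∈ Set.Icc (0:ℝ) 1) ∧ (⨆ x, p x) = 1 ∧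
    ∀ γ ∈ Set.Ioc (0:ℝ) 1, IsCompact {x | γ ≤ p x}

variable {S : Type*} [MetricSpace S]

/-- Time shift `θ_s` on continuous paths. -/
def pshift (s : ℝ≥0) (X : C(ℝ≥0, S)) : C(ℝ≥0, S) :=
  ⟨fun t => X (s + t), X.continuous.comp (continuous_const.add continuous_id)⟩

/-- `Π_{x,t}(y)`. -/
def transDen (Px : S → C(ℝ≥0, S) → ℝ) (x : S) (t : ℝ≥0) (y : S) : ℝ :=
  ⨆ X ∈ {X : C(ℝ≥0, S) | X t = y}, Px x X

/-- The standing assumptions (2.2)--(2.5) of the paper, together with the basic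
assumptions on the family of path deviability densities `Px` and the set `A`. -/
structure DevSetup (S : Type*) [MetricSpace S] (Px : S → C(ℝ≥0, S) → ℝ) (A : Set S) :
    Prop where
  dev : ∀ x, IsDeviabilityDensity (Px x)
  start : ∀ x (X : C(ℝ≥0, S)), X 0 ≠ x → Px x X = 0
  /-- (2.2) upper semicontinuity -/
  usc : UpperSemicontinuous (fun q : S × C(ℝ≥0, S) => Px q.1 q.2)
  /-- (2.2) uniform upper compactness -/
  cpt : ∀ K : Set S, IsCompact K → ∀ γ ∈ Set.Ioc (0:ℝ) 1,
    IsCompact (⋃ x ∈ K, {X : C(ℝ≥0, S) | γ ≤ Px x X})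
  /-- (2.3) the maxitive Markov property -/
  markov : ∀ x (X : C(ℝ≥0, S)) (s : ℝ≥0),
    Px x X = (⨆ X' ∈ {X' : C(ℝ≥0, S) | ∀ u ≤ s, X' u = X u}, Px x X') *
      Px (X s) (pshift s X)
  /-- (2.4) `A` is locally finite -/
  locFin : ∀ K : Set S, IsCompact K → (K ∩ A).Finite
  /-- (2.4)(i) -/
  attract : ∀ x (X : C(ℝ≥0, S)), Px x X = 1 → (⨅ t : ℝ≥0, infDist (X t) A) = 0
  /-- (2.4)(ii) -/
  equil : ∀ a ∈ A, Px a (ContinuousMap.const ℝ≥0 a) = 1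
  /-- (2.4)(iii) -/
  connect : ∀ a ∈ A, ∀ a' ∈ A, ∃ t : ℝ≥0, 0 < t ∧ 0 < transDen Px a t a'
  /-- (2.4)(iv) -/
  nearA : ∀ ε : ℝ, 0 < ε → ∃ δ : ℝ, 0 < δ ∧ ∀ x : S, infDist x A < δ →
    ∃ s₀ s₁ : ℝ≥0, 0 < s₀ ∧ 0 < s₁ ∧ ∃ a ∈ A,
      1 - ε < transDen Px x s₀ a ∧ 1 - ε < transDen Px a s₁ x
  /-- (2.4)(v) -/
  localMove : ∀ x : S, ∀ ε : ℝ, 0 < ε → ∃ δ : ℝ, 0 < δ ∧ ∃ t₀ t₁ : ℝ≥0,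
    ∀ x' : S, dist x x' < δ →
      1 - ε < transDen Px x t₀ x' ∧ 1 - ε < transDen Px x' t₁ x
  /-- (2.5) uniform tightness -/
  tight : ∀ K₁ : Set S, IsCompact K₁ → ∀ ε : ℝ, 0 < ε → ∃ K₂ : Set S, IsCompact K₂ ∧
    Filter.limsup (fun t : ℝ≥0 => ⨆ x ∈ K₁, ⨆ y ∈ K₂ᶜ, transDen Px x t y) atTop < ε

/-- LD convergence at the given rate of a sequence of Borel probability measures to a
deviability density. -/
def LDConv {E : Type*} [TopologicalSpace E] [MeasurableSpace E]
    (Q : ℕ → Measure E) (rate : ℕ → ℕ) (p : E → ℝ) : Prop :=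
  ∀ f : E → ℝ, Continuous f → (∀ x, 0 ≤ f x) → BddAbove (Set.range f) →
    Tendsto (fun n => (∫ x, (f x) ^ (rate n) ∂(Q n)) ^ ((rate n : ℝ)⁻¹)) atTop
      (𝓝 (⨆ x, f x * p x))

variable [MeasurableSpace S] [BorelSpace S]

/-- The max flux `Φ_ρ(Γ,Γ')` relative to the limiting transition density `PL`. -/
def maxFlux (PL : S → S → ℝ) (ρ : S → ℝ) (Γ Γ' : Set S) : ℝ :=
  ⨆ x ∈ Γ, ρ x * ⨆ y ∈ Γ', PL x y

/-- `Φ_ρ(Γ, x)`, the max flux into a point. -/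
def maxFluxPt (PL : S → S → ℝ) (ρ : S → ℝ) (Γ : Set S) (x : S) : ℝ :=
  ⨆ a ∈ Γ, ρ a * PL a x


section helpers

lemma hb_le_biSup {α : Type*} (f : α → ℝ) (s : Set α) (h0 : ∀ x, 0 ≤ f x)
    (h1 : ∀ x, f x ≤ 1) {x : α} (hx : x ∈ s) : f x ≤ ⨆ z ∈ s, f z := by
  have hb : ∀ z, (⨆ (_ : z ∈ s), f z) ≤ 1 := fun z => Real.iSup_le (fun _ => h1 z) zero_le_one
  have hB : BddAbove (Set.range fun z => ⨆ (_ : z ∈ s), f z) := by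
    refine ⟨1, ?_⟩
    rintro _ ⟨z, rfl⟩
    exact hb z
  have h2 := le_ciSup hB x
  have h3 : (⨆ (_ : x ∈ s), f x) = f x := by
    have : Nonempty (x ∈ s) := ⟨hx⟩
    exact ciSup_const
  rw [h3] at h2
  exact h2

lemma hb_biSup_le {α : Type*} (f : α → ℝ) (s : Set α) {c : ℝ} (hc : 0 ≤ c)
    (h1 : ∀ x ∈ s, f x ≤ c) : (⨆ z ∈ s, f z) ≤ c :=
  Real.iSup_le (fun z => Real.iSup_le (fun hz => h1 z hz) hc) hc

lemma hb_biSup_nonneg {α : Type*} (f : α → ℝ) (s : Set α)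
    (h1 : ∀ x, 0 ≤ f x) : 0 ≤ (⨆ z ∈ s, f z) :=
  Real.iSup_nonneg (fun z => Real.iSup_nonneg (fun _ => h1 z))

lemma exists_above {a b G : ℝ} (h : a * b < G) :
    ∃ a' b', a < a' ∧ b < b' ∧ a' * b' < G := by
  have : Tendsto (fun η : ℝ => (a + η) * (b + η)) (𝓝[>] 0) (𝓝 ((a + 0) * (b + 0))) := by
    apply Tendsto.mono_left _ nhdsWithin_le_nhds
    exact Continuous.tendsto (by fun_prop) 0
  rw [add_zero, add_zero] at this
  obtain ⟨η, h1, h2⟩ := ((this.eventually_lt_const h).and self_mem_nhdsWithin).exists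
  have h2 : 0 < η := h2
  exact ⟨a + η, b + η, by linarith, by linarith, h1⟩

lemma exists_below {a b c : ℝ} (h : c < a * b) (hc : 0 ≤ c) (ha : 0 ≤ a) (hb : 0 ≤ b) :
    ∃ a' b', 0 ≤ a' ∧ 0 ≤ b' ∧ a' < a ∧ b' < b ∧ c < a' * b' := by
  have hab : 0 < a * b := lt_of_le_of_lt hc h
  have ha : 0 < a := by
    rcases ha.eq_or_lt with h | h
    · simp [← h] at hab
    · exact h
  have hb : 0 < b := by
    rcases hb.eq_or_lt with h | h
    · simp [← h] at hab
    · exact h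
  have : Tendsto (fun η : ℝ => (a - η) * (b - η)) (𝓝[>] 0) (𝓝 ((a - 0) * (b - 0))) := by
    apply Tendsto.mono_left _ nhdsWithin_le_nhds
    exact Continuous.tendsto (by fun_prop) 0
  rw [sub_zero, sub_zero] at this
  have e1 : ∀ᶠ η : ℝ in 𝓝[>] 0, η < a := nhdsWithin_le_nhds (gt_mem_nhds ha)
  have e2 : ∀ᶠ η : ℝ in 𝓝[>] 0, η < b := nhdsWithin_le_nhds (gt_mem_nhds hb)
  obtain ⟨η, ⟨h1, h2⟩, h3, h4⟩ :=
    ((this.eventually_const_lt h).and self_mem_nhdsWithin).and (e1.and e2) |>.exists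
  have h2 : 0 < η := h2
  exact ⟨a - η, b - η, by linarith, by linarith, by linarith, by linarith, h1⟩

/-- Turning sequential statements into local uniform ones. -/
lemma eventually_prod_of_seq {E : Type*} [MetricSpace E] (x : E) (Q : ℕ → E → Prop)
    (h : ∀ xs : ℕ → E, Tendsto xs atTop (𝓝 x) → ∀ᶠ n in atTop, Q n (xs n)) :
    ∀ᶠ q : ℕ × E in atTop ×ˢ 𝓝 x, Q q.1 q.2 := by
  by_contra hcon
  have hf : ∃ᶠ q : ℕ × E in atTop ×ˢ 𝓝 x, ¬ Q q.1 q.2 := not_eventually.1 hcon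
  obtain ⟨w, hw, hwQ⟩ := exists_seq_forall_of_frequently hf
  have hw1 : Tendsto (fun k => (w k).1) atTop atTop := tendsto_fst.comp hw
  have hw2 : Tendsto (fun k => (w k).2) atTop (𝓝 x) := tendsto_snd.comp hw
  obtain ⟨ψ, hψ, hmono⟩ := strictMono_subseq_of_tendsto_atTop hw1
  set m : ℕ → ℕ := (fun k => (w k).1) ∘ ψ with hm
  set z : ℕ → E := (fun k => (w k).2) ∘ ψ with hz
  have hz2 : Tendsto z atTop (𝓝 x) := hw2.comp hψ.tendsto_atTop
  have hxs : Tendsto (Function.extend m z (fun _ => x)) atTop (𝓝 x) := by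
    intro U hU
    have h1 : ∀ᶠ k in atTop, z k ∈ U := hz2 hU
    obtain ⟨K, hK⟩ := eventually_atTop.1 h1
    refine mem_atTop_sets.2 ⟨m K, fun n hn => ?_⟩
    show Function.extend m z (fun _ => x) n ∈ U
    by_cases hex : ∃ k, m k = n
    · obtain ⟨k, rfl⟩ := hex
      rw [hmono.injective.extend_apply]
      exact hK k (hmono.le_iff_le.1 hn)
    · rw [Function.extend_apply' _ _ _ hex]
      exact mem_of_mem_nhds hU
  obtain ⟨n, hn⟩ := eventually_atTop.1 (h _ hxs)
  have h2 := hn (m n) hmono.le_apply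
  rw [hmono.injective.extend_apply] at h2
  exact hwQ (ψ n) h2

lemma LD_upper {E : Type*} [MetricSpace E] [MeasurableSpace E] [BorelSpace E]
    (Q : ℕ → Measure E) (r : ℕ → ℕ) (p : E → ℝ) (hQ : ∀ n, IsProbabilityMeasure (Q n))
    (hr : Tendsto r atTop atTop) (hp0 : ∀ x, 0 ≤ p x)
    (hLD : LDConv Q r p) {D I : Set E} (hD : IsClosed D) (hI : IsClosed I)
    (hDI : Disjoint I D) {c c' : ℝ} (hc0 : 0 ≤ c) (hc : ∀ x, x ∉ I → p x ≤ c) (hcc : c < c') :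
    ∀ᶠ n in atTop, Q n D ≤ ENNReal.ofReal (c' ^ r n) := by
  obtain ⟨f, f0, f1, fI⟩ := exists_continuous_zero_one_of_isClosed hI hD hDI
  have h := hLD f f.continuous (fun x => (fI x).1)
    ⟨1, by rintro _ ⟨x, rfl⟩; exact (fI x).2⟩
  have hle : (⨆ x, f x * p x) ≤ c := by
    refine Real.iSup_le (fun x => ?_) hc0
    by_cases hx : x ∈ I
    · have : f x = 0 := f0 hx
      rw [this, zero_mul]; exact hc0
    · calc f x * p x ≤ 1 * p x := mul_le_mul_of_nonneg_right (fI x).2 (hp0 x)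
        _ ≤ c := by rw [one_mul]; exact hc x hx
  filter_upwards [h.eventually_lt_const (lt_of_le_of_lt hle hcc), hr.eventually_gt_atTop 0]
    with n hn hrn
  have hJ0 : 0 ≤ ∫ x, f x ^ r n ∂(Q n) := integral_nonneg (fun x => pow_nonneg (fI x).1 _)
  have hJ : ∫ x, f x ^ r n ∂(Q n) ≤ c' ^ r n := by
    rw [← Real.rpow_inv_natCast_pow hJ0 hrn.ne']
    exact pow_le_pow_left₀ (Real.rpow_nonneg hJ0 _) hn.le _
  have hint : Integrable (fun x => f x ^ r n) (Q n) := by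
    refine Integrable.of_bound (C := 1)
      (f.continuous.pow _).measurable.aestronglyMeasurable (Eventually.of_forall fun x => ?_)
    rw [Real.norm_of_nonneg (pow_nonneg (fI x).1 _)]
    exact pow_le_one₀ (fI x).1 (fI x).2
  have hDle : (Q n).real D ≤ ∫ x, f x ^ r n ∂(Q n) := by
    rw [← integral_indicator_one hD.measurableSet]
    refine integral_mono ((integrable_const (1:ℝ)).indicator hD.measurableSet) hint (fun x => ?_)
    by_cases hx : x ∈ D
    · have : f x = 1 := f1 hx
      simp [hx, this]
    · simp [hx, pow_nonneg (fI x).1 _]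
  rw [← ofReal_measureReal]
  exact ENNReal.ofReal_le_ofReal (hDle.trans hJ)

lemma LD_lower {E : Type*} [MetricSpace E] [MeasurableSpace E] [BorelSpace E]
    (Q : ℕ → Measure E) (r : ℕ → ℕ) (p : E → ℝ) (hQ : ∀ n, IsProbabilityMeasure (Q n))
    (hr : Tendsto r atTop atTop) (hp0 : ∀ x, 0 ≤ p x) (hp1 : ∀ x, p x ≤ 1)
    (hLD : LDConv Q r p) {O : Set E} (hO : IsOpen O) {y : E} (hy : y ∈ O)
    {c : ℝ} (hc0 : 0 ≤ c) (hc : c < p y) :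
    ∀ᶠ n in atTop, ENNReal.ofReal (c ^ r n) ≤ Q n O := by
  obtain ⟨f, f0, f1, fI⟩ := exists_continuous_zero_one_of_isClosed hO.isClosed_compl
    (isClosed_singleton (x := y)) (by simpa using hy)
  have h := hLD f f.continuous (fun x => (fI x).1)
    ⟨1, by rintro _ ⟨x, rfl⟩; exact (fI x).2⟩
  have hle : p y ≤ (⨆ x, f x * p x) := by
    have hB : BddAbove (Set.range fun x => f x * p x) := by
      refine ⟨1, ?_⟩
      rintro _ ⟨x, rfl⟩
      exact mul_le_one₀ (fI x).2 (hp0 x) (hp1 x)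
    have h2 := le_ciSup hB y
    have h3 : f y = 1 := f1 rfl
    simpa [h3] using h2
  filter_upwards [h.eventually_const_lt (lt_of_lt_of_le hc hle), hr.eventually_gt_atTop 0]
    with n hn hrn
  have hJ0 : 0 ≤ ∫ x, f x ^ r n ∂(Q n) := integral_nonneg (fun x => pow_nonneg (fI x).1 _)
  have hJ : c ^ r n ≤ ∫ x, f x ^ r n ∂(Q n) := by
    rw [← Real.rpow_inv_natCast_pow hJ0 hrn.ne']
    exact pow_le_pow_left₀ hc0 hn.le _
  have hint : Integrable (fun x => f x ^ r n) (Q n) := by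
    refine Integrable.of_bound (C := 1)
      (f.continuous.pow _).measurable.aestronglyMeasurable (Eventually.of_forall fun x => ?_)
    rw [Real.norm_of_nonneg (pow_nonneg (fI x).1 _)]
    exact pow_le_one₀ (fI x).1 (fI x).2
  have hDle : ∫ x, f x ^ r n ∂(Q n) ≤ (Q n).real O := by
    rw [← integral_indicator_one hO.measurableSet]
    refine integral_mono hint ((integrable_const (1:ℝ)).indicator hO.measurableSet) (fun x => ?_)
    by_cases hx : x ∈ O
    · simp [hx, pow_le_one₀ (fI x).1 (fI x).2]
    · have : f x = 0 := f0 hx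
      simp [hx, this, hrn.ne']
  rw [← ofReal_measureReal]
  exact ENNReal.ofReal_le_ofReal (hJ.trans hDle)


lemma hb_mul_biSup_le {α : Type*} (f : α → ℝ) (s : Set α) {r c : ℝ} (hr : 0 ≤ r) (hc : 0 ≤ c)
    (h1 : ∀ x ∈ s, r * f x ≤ c) : r * (⨆ z ∈ s, f z) ≤ c := by
  rw [Real.mul_iSup_of_nonneg hr]
  refine Real.iSup_le (fun z => ?_) hc
  rw [Real.mul_iSup_of_nonneg hr]
  exact Real.iSup_le (fun hz => h1 z hz) hc

lemma dev_superlevel {E : Type*} [TopologicalSpace E] {p : E → ℝ} (h : IsDeviabilityDensity p)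
    {γ : ℝ} (hγ : 0 < γ) : IsCompact {x | γ ≤ p x} := by
  by_cases h1 : γ ≤ 1
  · exact h.2.2 γ ⟨hγ, h1⟩
  · have : {x | γ ≤ p x} = ∅ := by
      ext x
      simp only [mem_ofPred_eq, mem_empty_iff_false, iff_false, not_le]
      exact lt_of_le_of_lt (h.1 x).2 (not_le.1 h1)
    rw [this]
    exact isCompact_empty

lemma dev_usc {E : Type*} [TopologicalSpace E] [T2Space E] {p : E → ℝ}
    (h : IsDeviabilityDensity p) {x : E} {a : ℝ} (ha : p x < a) : ∀ᶠ z in 𝓝 x, p z < a := by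
  have hc : IsClosed {x | a ≤ p x} :=
    (dev_superlevel h (lt_of_le_of_lt (h.1 x).1 ha)).isClosed
  have := hc.isOpen_compl.mem_nhds (show x ∈ {x | a ≤ p x}ᶜ by simpa using ha)
  filter_upwards [this] with z hz
  simpa using hz

/-- Concatenation of paths. -/
lemma exists_concat {E : Type*} [MetricSpace E] (X Y : C(ℝ≥0, E)) (s : ℝ≥0) (h : Y 0 = X s) :
    ∃ Z : C(ℝ≥0, E), (∀ u ≤ s, Z u = X u) ∧ pshift s Z = Y := by
  have hcont : Continuous (fun t : ℝ≥0 => if t ≤ s then X t else Y (t - s)) := by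
    refine Continuous.if_le X.continuous (by fun_prop) continuous_id continuous_const ?_
    intro t ht
    have ht : t = s := ht
    subst ht
    simp [h]
  refine ⟨⟨_, hcont⟩, fun u hu => by simp [hu], ?_⟩
  ext t
  simp only [pshift, ContinuousMap.coe_mk]
  split_ifs with ht
  · have : t = 0 := by simpa using ht
    subst this
    simp [h]
  · simp

section dev
variable {T : Type*} [MetricSpace T] {Px : T → C(ℝ≥0, T) → ℝ} {A : Set T}

lemma td_nonneg (hyp : DevSetup T Px A) (x : T) (t : ℝ≥0) (y : T) : 0 ≤ transDen Px x t y :=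
  hb_biSup_nonneg _ _ (fun X => ((hyp.dev x).1 X).1)

lemma td_le_one (hyp : DevSetup T Px A) (x : T) (t : ℝ≥0) (y : T) : transDen Px x t y ≤ 1 :=
  hb_biSup_le _ _ zero_le_one (fun X _ => ((hyp.dev x).1 X).2)

lemma le_td (hyp : DevSetup T Px A) (x : T) (t : ℝ≥0) (X : C(ℝ≥0, T)) :
    Px x X ≤ transDen Px x t (X t) :=
  hb_le_biSup (Px x) {X' : C(ℝ≥0, T) | X' t = X t} (fun X => ((hyp.dev x).1 X).1)
    (fun X => ((hyp.dev x).1 X).2) rfl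

lemma td_comp (hyp : DevSetup T Px A) (x y z : T) (s t : ℝ≥0) :
    transDen Px x s y * transDen Px y t z ≤ transDen Px x (s + t) z := by
  have hR := td_nonneg hyp x (s + t) z
  rw [mul_comm]
  refine hb_mul_biSup_le _ _ (td_nonneg hyp y t z) hR (fun X hX => ?_)
  rw [mul_comm]
  refine hb_mul_biSup_le _ _ ((hyp.dev x).1 X).1 hR (fun Y hY => ?_)
  have hX : X s = y := hX
  have hY : Y t = z := hY
  by_cases h0 : Y 0 = y
  · obtain ⟨Z, hZ1, hZ2⟩ := exists_concat X Y s (h0.trans hX.symm)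
    have hZs : Z s = y := (hZ1 s le_rfl).trans hX
    have hm := hyp.markov x Z s
    rw [hZ2, hZs] at hm
    have hsup : Px x X ≤ ⨆ X' ∈ {X' : C(ℝ≥0, T) | ∀ u ≤ s, X' u = Z u}, Px x X' :=
      hb_le_biSup (Px x) _ (fun X => ((hyp.dev x).1 X).1)
        (fun X => ((hyp.dev x).1 X).2) (fun u hu => (hZ1 u hu).symm)
    have hend : Z (s + t) = z := by
      have : pshift s Z t = z := by rw [hZ2, hY]
      exact this
    calc Px x X * Px y Y ≤ Px x Z := by
          rw [hm]; exact mul_le_mul_of_nonneg_right hsup ((hyp.dev y).1 Y).1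
      _ ≤ transDen Px x (s + t) z := by rw [← hend]; exact le_td hyp x (s + t) Z
  · rw [hyp.start y Y h0, mul_zero]
    exact hR

lemma stepA (hyp : DevSetup T Px A) {PL : T → T → ℝ}
    (hPL : ∀ x y : T, Tendsto (fun t : ℝ≥0 => transDen Px x t y) atTop (𝓝 (PL x y)))
    {ρ : T → ℝ} (hρ : IsDeviabilityDensity ρ) {C D : Set T} (hC : IsClosed C) (hD : IsClosed D)
    {G : ℝ} (hG : 0 < G) (h : ∀ x ∈ C, ∀ y ∈ D, ρ x * PL x y < G) :
    ∀ᶠ t : ℝ≥0 in atTop, ∀ x ∈ C, ∀ y ∈ D, ρ x * transDen Px x t y ≤ G := by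
  have hK1 : IsCompact {x | G ≤ ρ x} := dev_superlevel hρ hG
  obtain ⟨K2, hK2, hlim⟩ := hyp.tight _ hK1 G hG
  have hin0 : ∀ (t : ℝ≥0) (x : T), 0 ≤ ⨆ y ∈ K2ᶜ, transDen Px x t y := fun t x =>
    hb_biSup_nonneg _ _ (fun y => td_nonneg hyp x t y)
  have hin1 : ∀ (t : ℝ≥0) (x : T), (⨆ y ∈ K2ᶜ, transDen Px x t y) ≤ 1 := fun t x =>
    hb_biSup_le _ _ zero_le_one (fun y _ => td_le_one hyp x t y)
  have hev := eventually_lt_of_limsup_lt hlim (by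
    refine ⟨1, ?_⟩
    rw [eventually_map]
    exact Eventually.of_forall fun t => hb_biSup_le _ _ zero_le_one (fun x _ => hin1 t x))
  have hKK : IsCompact (({x | G ≤ ρ x} ∩ C) ×ˢ (K2 ∩ D)) :=
    (hK1.inter_right hC).prod (hK2.inter_right hD)
  have hloc : ∀ p ∈ ({x | G ≤ ρ x} ∩ C) ×ˢ (K2 ∩ D),
      {q : ℝ≥0 × (T × T) | ρ q.2.1 * transDen Px q.2.1 q.1 q.2.2 ≤ G} ∈ atTop ×ˢ 𝓝 p := by
    rintro ⟨x0, y0⟩ ⟨⟨-, hx0⟩, -, hy0⟩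
    have hx0 : x0 ∈ C := hx0
    have hy0 : y0 ∈ D := hy0
    have hPL0 : 0 ≤ PL x0 y0 := ge_of_tendsto' (hPL x0 y0) (fun t => td_nonneg hyp _ _ _)
    obtain ⟨a, b, ha, hb, hab⟩ := exists_above (h x0 hx0 y0 hy0)
    have ha0 : 0 < a := lt_of_le_of_lt (hρ.1 x0).1 ha
    have hb0 : 0 < b := lt_of_le_of_lt hPL0 hb
    have hε : ∃ ε : ℝ, 0 < ε ∧ ε < 1 ∧ a * b < (1 - ε) * (1 - ε) * G := by
      have : Tendsto (fun η : ℝ => (1 - η) * (1 - η) * G) (𝓝[>] 0)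
          (𝓝 ((1 - 0) * (1 - 0) * G)) := by
        apply Tendsto.mono_left _ nhdsWithin_le_nhds
        exact Continuous.tendsto (by fun_prop) 0
      have e1 : ∀ᶠ η : ℝ in 𝓝[>] 0, η < 1 := nhdsWithin_le_nhds (gt_mem_nhds one_pos)
      have e2 := this.eventually_const_lt (show a * b < (1 - 0) * (1 - 0) * G by simpa using hab)
      obtain ⟨η, ⟨h1, h2⟩, h3⟩ := ((e1.and e2).and self_mem_nhdsWithin).exists
      exact ⟨η, h3, h1, h2⟩
    obtain ⟨ε, hε0, hε1, hεG⟩ := hε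
    obtain ⟨δ, hδ, t0, _, hmx⟩ := hyp.localMove x0 ε hε0
    obtain ⟨δ', hδ', _, t1, hmy⟩ := hyp.localMove y0 ε hε0
    have et : ∀ᶠ t : ℝ≥0 in atTop, transDen Px x0 (t0 + t + t1) y0 < b := by
      have htt : Tendsto (fun t : ℝ≥0 => t0 + t + t1) atTop atTop :=
        tendsto_atTop_mono (fun t => by
          calc t ≤ t0 + t := le_add_self
            _ ≤ t0 + t + t1 := le_self_add) tendsto_id
      exact ((hPL x0 y0).comp htt).eventually_lt_const hb
    have ex : ∀ᶠ x in 𝓝 x0, ρ x < a ∧ dist x x0 < δ :=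
      (dev_usc hρ ha).and (Metric.ball_mem_nhds x0 hδ)
    have ey : ∀ᶠ y in 𝓝 y0, dist y y0 < δ' := Metric.ball_mem_nhds y0 hδ'
    have exy : ∀ᶠ p : T × T in 𝓝 (x0, y0), (ρ p.1 < a ∧ dist p.1 x0 < δ) ∧ dist p.2 y0 < δ' := by
      rw [nhds_prod_eq]
      exact ex.prod_mk ey
    filter_upwards [et.prod_mk exy]
    rintro ⟨t, x, y⟩ ⟨h1, ⟨h2, h3⟩, h4⟩
    simp only at h1 h2 h3 h4
    simp only [mem_ofPred_eq]
    have m1 := (hmx x (by rwa [dist_comm])).1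
    have m2 := (hmy y (by rwa [dist_comm])).2
    have c1 := td_comp hyp x0 x y t0 t
    have c2 := td_comp hyp x0 y y0 (t0 + t) t1
    have n1 := td_nonneg hyp x t y
    have n2 := td_nonneg hyp x0 (t0 + t) y
    have hε' : 0 < 1 - ε := by linarith
    have s1 : (1 - ε) * transDen Px x t y ≤ transDen Px x0 (t0 + t) y :=
      (mul_le_mul_of_nonneg_right m1.le n1).trans c1
    have s2 : (1 - ε) * transDen Px x0 (t0 + t) y ≤ b := by
      rw [mul_comm]
      exact ((mul_le_mul_of_nonneg_left m2.le n2).trans c2).trans h1.le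
    have s3 : (1 - ε) * (1 - ε) * transDen Px x t y ≤ b := by
      rw [mul_assoc]
      exact (mul_le_mul_of_nonneg_left s1 hε'.le).trans s2
    have r0 := (hρ.1 x).1
    have s4 : (1 - ε) * (1 - ε) * (ρ x * transDen Px x t y) ≤ (1 - ε) * (1 - ε) * G := by
      calc (1 - ε) * (1 - ε) * (ρ x * transDen Px x t y)
          = ρ x * ((1 - ε) * (1 - ε) * transDen Px x t y) := by ring
        _ ≤ a * b := mul_le_mul h2.le s3 (by positivity) ha0.le
        _ ≤ _ := hεG.le
    exact le_of_mul_le_mul_left s4 (by positivity)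
  have hunif := hKK.mem_prod_nhdsSet_of_forall hloc
  have hunif2 : ∀ᶠ t : ℝ≥0 in atTop, ∀ p ∈ ({x | G ≤ ρ x} ∩ C) ×ˢ (K2 ∩ D),
      ρ p.1 * transDen Px p.1 t p.2 ≤ G := by
    have : ∀ᶠ q : ℝ≥0 × (T × T) in atTop ×ˢ 𝓝ˢ (({x | G ≤ ρ x} ∩ C) ×ˢ (K2 ∩ D)),
      ρ q.2.1 * transDen Px q.2.1 q.1 q.2.2 ≤ G := hunif
    exact this.curry.mono fun _ h => h.self_of_nhdsSet
  filter_upwards [hunif2, hev] with t ht1 ht2 x hx y hy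
  have r0 := (hρ.1 x).1
  have r1 := (hρ.1 x).2
  have n1 := td_nonneg hyp x t y
  have n2 := td_le_one hyp x t y
  by_cases hxG : G ≤ ρ x
  · by_cases hyK : y ∈ K2
    · exact ht1 (x, y) ⟨⟨hxG, hx⟩, hyK, hy⟩
    · have l1 : transDen Px x t y ≤ ⨆ y ∈ K2ᶜ, transDen Px x t y :=
        hb_le_biSup (fun y => transDen Px x t y) _ (td_nonneg hyp x t) (td_le_one hyp x t) hyK
      have l2 : (⨆ y ∈ K2ᶜ, transDen Px x t y) ≤
          ⨆ x ∈ {x | G ≤ ρ x}, ⨆ y ∈ K2ᶜ, transDen Px x t y :=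
        hb_le_biSup (fun x => ⨆ y ∈ K2ᶜ, transDen Px x t y) _ (hin0 t) (hin1 t) hxG
      calc ρ x * transDen Px x t y ≤ 1 * transDen Px x t y := mul_le_mul_of_nonneg_right r1 n1
        _ ≤ G := by rw [one_mul]; exact (l1.trans l2).trans (le_of_lt ht2)
  · calc ρ x * transDen Px x t y ≤ ρ x * 1 := mul_le_mul_of_nonneg_left n2 r0
      _ ≤ G := by linarith [not_le.1 hxG]

variable [MeasurableSpace T] [BorelSpace T]

lemma stepB (hyp : DevSetup T Px A)
    (κ : ℕ → ℝ≥0 → ProbabilityTheory.Kernel T T)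
    (hκ : ∀ n t, ProbabilityTheory.IsMarkovKernel (κ n t))
    (P : ℕ → Measure T) (hP : ∀ n, IsProbabilityMeasure (P n))
    (hκLD : ∀ (t : ℝ≥0) (x : T) (xs : ℕ → T), Tendsto xs atTop (𝓝 x) →
      LDConv (fun n => κ n t (xs n)) (fun n => n) (fun y => transDen Px x t y))
    {ρ : T → ℝ} (hρdev : IsDeviabilityDensity ρ)
    (φ : ℕ → ℕ) (hφ : StrictMono φ)
    (hρ : LDConv (fun k => P (φ k)) φ ρ) (t : ℝ≥0) {C D : Set T} (hC : IsClosed C)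
    (hD : IsClosed D) {G G' : ℝ} (hG : 0 < G) (hGG : G < G')
    (h : ∀ x ∈ C, ∀ y ∈ D, ρ x * transDen Px x t y ≤ G) :
    ∃ M : ℕ, ∀ᶠ k in atTop, ∫⁻ x in C, κ (φ k) t x D ∂(P (φ k)) ≤
      M * ENNReal.ofReal (G' ^ φ k) := by
  have hK : IsCompact ({x | G ≤ ρ x} ∩ C) := (dev_superlevel hρdev hG).inter_right hC
  have key : ∃ U : Set T, IsOpen U ∧ ({x | G ≤ ρ x} ∩ C) ⊆ U ∧ ∃ M : ℕ, ∀ᶠ k in atTop,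
      ∫⁻ x in U, κ (φ k) t x D ∂(P (φ k)) ≤ M * ENNReal.ofReal (G' ^ φ k) := by
    refine hK.induction_on (p := fun s => ∃ U : Set T, IsOpen U ∧ s ⊆ U ∧ ∃ M : ℕ,
      ∀ᶠ k in atTop, ∫⁻ x in U, κ (φ k) t x D ∂(P (φ k)) ≤ M * ENNReal.ofReal (G' ^ φ k))
      ?_ ?_ ?_ ?_
    · exact ⟨∅, isOpen_empty, subset_rfl, 0, Eventually.of_forall fun k => by simp⟩
    · rintro s s' hss ⟨U, hU, hsU, hM⟩
      exact ⟨U, hU, hss.trans hsU, hM⟩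
    · rintro s s' ⟨U, hU, hsU, M, hM⟩ ⟨U', hU', hsU', M', hM'⟩
      refine ⟨U ∪ U', hU.union hU', union_subset_union hsU hsU', M + M', ?_⟩
      filter_upwards [hM, hM'] with k h1 h2
      refine (lintegral_union_le _ _ _).trans ?_
      push_cast
      rw [add_mul]
      exact add_le_add h1 h2
    · rintro x0 ⟨-, hx0⟩
      have hsup : ρ x0 * (⨆ y ∈ D, transDen Px x0 t y) ≤ G :=
        hb_mul_biSup_le _ _ (hρdev.1 x0).1 hG.le (h x0 hx0)
      obtain ⟨a, b, ha, hb, hab⟩ := exists_above (lt_of_le_of_lt hsup hGG)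
      have hs0 : 0 ≤ ⨆ y ∈ D, transDen Px x0 t y :=
        hb_biSup_nonneg _ _ (fun y => td_nonneg hyp x0 t y)
      obtain ⟨b1, hb1, hb1b⟩ := exists_between hb
      obtain ⟨a1, ha1, ha1a⟩ := exists_between ha
      have hb10 : 0 < b1 := lt_of_le_of_lt hs0 hb1
      have ha10 : 0 < a1 := lt_of_le_of_lt (hρdev.1 x0).1 ha1
      -- kernel bound
      have hker : ∀ᶠ q : ℕ × T in atTop ×ˢ 𝓝 x0,
          κ q.1 t q.2 D ≤ ENNReal.ofReal (b ^ q.1) := by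
        refine eventually_prod_of_seq x0 (fun n z => κ n t z D ≤ ENNReal.ofReal (b ^ n)) ?_
        intro xs hxs
        have hI : IsCompact ((fun X : C(ℝ≥0, T) => X t) '' {X | b1 ≤ Px x0 X}) :=
          (dev_superlevel (hyp.dev x0) hb10).image (continuous_eval_const t)
        refine LD_upper (fun n => κ n t (xs n)) (fun n => n) (fun y => transDen Px x0 t y)
          (fun n => (hκ n t).isProbabilityMeasure (xs n)) tendsto_id (td_nonneg hyp x0 t)
          (hκLD t x0 xs hxs) hD hI.isClosed ?_ hb10.le ?_ hb1b
        · rw [Set.disjoint_left]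
          rintro _ ⟨X, hX, rfl⟩ hXD
          have hX : b1 ≤ Px x0 X := hX
          have l1 := le_td hyp x0 t X
          have l2 := hb_le_biSup (fun y => transDen Px x0 t y) D (td_nonneg hyp x0 t)
            (td_le_one hyp x0 t) hXD
          simp only at l2
          linarith
        · intro y hy
          refine hb_biSup_le _ _ hb10.le (fun X hX => ?_)
          by_contra hcon
          exact hy ⟨X, (not_le.1 hcon).le, hX⟩
      obtain ⟨pa, hpa, pb, hpb, hpp⟩ := eventually_prod_iff.1 hker
      have hnb : ∀ᶠ z in 𝓝 x0, ρ z < a1 ∧ pb z := (dev_usc hρdev ha1).and hpb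
      obtain ⟨r, hr, hball⟩ := Metric.nhds_basis_closedBall.eventually_iff.1 hnb
      have hPball := LD_upper (fun k => P (φ k)) φ ρ (fun k => hP _) hφ.tendsto_atTop
        (fun x => (hρdev.1 x).1) hρ (Metric.isClosed_closedBall (x := x0) (ε := r))
        (dev_superlevel hρdev ha10).isClosed
        (by
          rw [Set.disjoint_left]
          intro z hz hzb
          have hz : a1 ≤ ρ z := hz
          linarith [(hball hzb).1])
        ha10.le (fun x hx => (not_le.1 hx).le) ha1a
      refine ⟨ball x0 r, mem_nhdsWithin_of_mem_nhds (ball_mem_nhds x0 hr), ball x0 r,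
        isOpen_ball, subset_rfl, 1, ?_⟩
      filter_upwards [hPball, hφ.tendsto_atTop.eventually hpa] with k h1 h2
      calc ∫⁻ x in ball x0 r, κ (φ k) t x D ∂(P (φ k))
          ≤ ∫⁻ x in ball x0 r, ENNReal.ofReal (b ^ φ k) ∂(P (φ k)) := by
            refine setLIntegral_mono measurable_const (fun z hz => ?_)
            exact hpp h2 (hball (ball_subset_closedBall hz)).2
        _ = ENNReal.ofReal (b ^ φ k) * P (φ k) (ball x0 r) := by simp
        _ ≤ ENNReal.ofReal (b ^ φ k) * ENNReal.ofReal (a ^ φ k) := by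
            gcongr
            exact (measure_mono ball_subset_closedBall).trans h1
        _ = ENNReal.ofReal ((a * b) ^ φ k) := by
            rw [← ENNReal.ofReal_mul (pow_nonneg (hb10.trans hb1b).le _), mul_pow, mul_comm]
        _ ≤ (1 : ℕ) * ENNReal.ofReal (G' ^ φ k) := by
            rw [Nat.cast_one, one_mul]
            refine ENNReal.ofReal_le_ofReal (pow_le_pow_left₀ ?_ hab.le _)
            exact mul_nonneg (ha10.trans ha1a).le (hb10.trans hb1b).le
  obtain ⟨U, hU, hKU, M, hM⟩ := key
  refine ⟨M + 1, ?_⟩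
  have hrest := LD_upper (fun k => P (φ k)) φ ρ (fun k => hP _) hφ.tendsto_atTop
    (fun x => (hρdev.1 x).1) hρ (hC.inter hU.isClosed_compl)
    (dev_superlevel hρdev hG).isClosed
    (by
      rw [Set.disjoint_left]
      rintro z hz ⟨hzC, hzU⟩
      exact hzU (hKU ⟨hz, hzC⟩))
    hG.le (fun x hx => (not_le.1 hx).le) hGG
  filter_upwards [hM, hrest] with k h1 h2
  have hsub : C ⊆ U ∪ (C ∩ Uᶜ) := by
    intro z hz
    by_cases hzU : z ∈ U
    · exact Or.inl hzU
    · exact Or.inr ⟨hz, hzU⟩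
  refine (lintegral_mono_set hsub).trans ((lintegral_union_le _ _ _).trans ?_)
  push_cast
  rw [add_mul, one_mul]
  refine add_le_add h1 (le_trans ?_ h2)
  calc ∫⁻ x in C ∩ Uᶜ, κ (φ k) t x D ∂(P (φ k)) ≤ ∫⁻ x in C ∩ Uᶜ, 1 ∂(P (φ k)) := by
        refine lintegral_mono (fun z => ?_)
        have := (hκ (φ k) t).isProbabilityMeasure z
        exact prob_le_one
    _ = _ := by simp

lemma stepC (hyp : DevSetup T Px A)
    (κ : ℕ → ℝ≥0 → ProbabilityTheory.Kernel T T)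
    (hκ : ∀ n t, ProbabilityTheory.IsMarkovKernel (κ n t))
    (P : ℕ → Measure T) (hP : ∀ n, IsProbabilityMeasure (P n))
    (hκLD : ∀ (t : ℝ≥0) (x : T) (xs : ℕ → T), Tendsto xs atTop (𝓝 x) →
      LDConv (fun n => κ n t (xs n)) (fun n => n) (fun y => transDen Px x t y))
    {ρ : T → ℝ} (hρdev : IsDeviabilityDensity ρ)
    (φ : ℕ → ℕ) (hφ : StrictMono φ)
    (hρ : LDConv (fun k => P (φ k)) φ ρ) (t : ℝ≥0) {O V : Set T} (hO : IsOpen O)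
    (hV : IsOpen V) {x y : T} (hx : x ∈ O) (hy : y ∈ V) {c : ℝ} (hc0 : 0 ≤ c)
    (hc : c < ρ x * transDen Px x t y) :
    ∀ᶠ k in atTop, ENNReal.ofReal (c ^ φ k) ≤ ∫⁻ x in O, κ (φ k) t x V ∂(P (φ k)) := by
  obtain ⟨a, b, ha0, hb0, ha, hb, hab⟩ :=
    exists_below hc hc0 (hρdev.1 x).1 (td_nonneg hyp x t y)
  have hker : ∀ᶠ q : ℕ × T in atTop ×ˢ 𝓝 x, ENNReal.ofReal (b ^ q.1) ≤ κ q.1 t q.2 V := by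
    refine eventually_prod_of_seq x (fun n z => ENNReal.ofReal (b ^ n) ≤ κ n t z V) ?_
    intro xs hxs
    exact LD_lower (fun n => κ n t (xs n)) (fun n => n) (fun y => transDen Px x t y)
      (fun n => (hκ n t).isProbabilityMeasure (xs n)) tendsto_id (td_nonneg hyp x t)
      (td_le_one hyp x t) (hκLD t x xs hxs) hV hy hb0 hb
  obtain ⟨pa, hpa, pb, hpb, hpp⟩ := eventually_prod_iff.1 hker
  obtain ⟨W, hW, hWo, hxW⟩ := _root_.mem_nhds_iff.1 (hpb.and (hO.mem_nhds hx))
  have hPW := LD_lower (fun k => P (φ k)) φ ρ (fun k => hP _) hφ.tendsto_atTop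
    (fun x => (hρdev.1 x).1) (fun x => (hρdev.1 x).2) hρ hWo hxW ha0 ha
  filter_upwards [hPW, hφ.tendsto_atTop.eventually hpa] with k h1 h2
  calc ENNReal.ofReal (c ^ φ k) ≤ ENNReal.ofReal ((a * b) ^ φ k) :=
        ENNReal.ofReal_le_ofReal (pow_le_pow_left₀ hc0 hab.le _)
    _ = ENNReal.ofReal (b ^ φ k) * ENNReal.ofReal (a ^ φ k) := by
        rw [← ENNReal.ofReal_mul (pow_nonneg hb0 _), mul_pow, mul_comm]
    _ ≤ ENNReal.ofReal (b ^ φ k) * P (φ k) W := by gcongr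
    _ = ∫⁻ x in W, ENNReal.ofReal (b ^ φ k) ∂(P (φ k)) := by simp
    _ ≤ ∫⁻ x in W, κ (φ k) t x V ∂(P (φ k)) := by
        refine setLIntegral_mono ((κ (φ k) t).measurable_coe hV.measurableSet) (fun z hz => ?_)
        exact hpp h2 (hW hz).1
    _ ≤ _ := lintegral_mono_set (fun z hz => (hW hz).2)

lemma balance (κ : ProbabilityTheory.Kernel T T) (hκ : ProbabilityTheory.IsMarkovKernel κ)
    (P : Measure T) (hP : IsProbabilityMeasure P) {Γ : Set T} (hΓ : MeasurableSet Γ)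
    (hinv : P Γ = ∫⁻ x, κ x Γ ∂P) :
    ∫⁻ x in Γ, κ x Γᶜ ∂P = ∫⁻ x in Γᶜ, κ x Γ ∂P := by
  have h1 : P Γ = ∫⁻ x in Γ, κ x Γ ∂P + ∫⁻ x in Γᶜ, κ x Γ ∂P := by
    rw [hinv, lintegral_add_compl _ hΓ]
  have h2 : P Γ = ∫⁻ x in Γ, κ x Γ ∂P + ∫⁻ x in Γ, κ x Γᶜ ∂P := by
    rw [← lintegral_add_left (κ.measurable_coe hΓ)]
    have : ∀ x, κ x Γ + κ x Γᶜ = 1 := fun x => by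
      have := hκ.isProbabilityMeasure x
      exact prob_add_prob_compl hΓ
    simp [this]
  have hfin : ∫⁻ x in Γ, κ x Γ ∂P ≠ ⊤ := by
    have : ∫⁻ x in Γ, κ x Γ ∂P ≤ P Γ := by rw [h1]; exact le_self_add
    exact (lt_of_le_of_lt this (measure_lt_top P Γ)).ne
  exact (ENNReal.add_right_inj hfin).1 (h2.symm.trans h1)

lemma no_exp {G c : ℝ} (hG : 0 < G) (hc : G < c) (M : ℕ) {φ : ℕ → ℕ} (hφ : StrictMono φ)
    (h : ∀ᶠ k in atTop, ENNReal.ofReal (c ^ φ k) ≤ M * ENNReal.ofReal (G ^ φ k)) : False := by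
  have h1 : Tendsto (fun n : ℕ => (c / G) ^ n) atTop atTop :=
    tendsto_pow_atTop_atTop_of_one_lt ((one_lt_div hG).2 hc)
  have h2 := (h1.comp hφ.tendsto_atTop).eventually_gt_atTop (M : ℝ)
  obtain ⟨k, h3, h4⟩ := (h.and h2).exists
  rw [← ENNReal.ofReal_natCast, ← ENNReal.ofReal_mul (Nat.cast_nonneg _)] at h3
  have hGp : 0 < G ^ φ k := pow_pos hG _
  have h5 := (ENNReal.ofReal_le_ofReal_iff (by positivity)).1 h3
  simp only [Function.comp, div_pow] at h4
  rw [lt_div_iff₀ hGp] at h4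
  linarith

end dev

end helpers

theorem stmt10
    (Px : S → C(ℝ≥0, S) → ℝ) (A : Set S) (hyp : DevSetup S Px A)
    (PL : S → S → ℝ)
    (hPL : ∀ x y : S, Tendsto (fun t : ℝ≥0 => transDen Px x t y) atTop (𝓝 (PL x y)))
    (κ : ℕ → ℝ≥0 → ProbabilityTheory.Kernel S S)
    (hκ : ∀ n t, ProbabilityTheory.IsMarkovKernel (κ n t))
    (P : ℕ → Measure S) (hP : ∀ n, IsProbabilityMeasure (P n))
    (hinv : ∀ n (t : ℝ≥0) (Γ : Set S), MeasurableSet Γ →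
      P n Γ = ∫⁻ x, κ n t x Γ ∂(P n))
    (hκLD : ∀ (t : ℝ≥0) (x : S) (xs : ℕ → S), Tendsto xs atTop (𝓝 x) →
      LDConv (fun n => κ n t (xs n)) (fun n => n) (fun y => transDen Px x t y))
    (ρ : S → ℝ) (hρdev : IsDeviabilityDensity ρ)
    (φ : ℕ → ℕ) (hφ : StrictMono φ)
    (hρ : LDConv (fun k => P (φ k)) φ ρ) :
    ∀ Γ : Set S, MeasurableSet Γ →
      maxFlux PL ρ (interior Γ) (interior Γᶜ) ≤ maxFlux PL ρ (closure Γᶜ) (closure Γ) := by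
  intro Γ hΓ
  have PL0 : ∀ x y, 0 ≤ PL x y := fun x y =>
    ge_of_tendsto' (hPL x y) (fun t => td_nonneg hyp _ _ _)
  have PL1 : ∀ x y, PL x y ≤ 1 := fun x y =>
    le_of_tendsto' (hPL x y) (fun t => td_le_one hyp _ _ _)
  have s0 : ∀ (Γ' : Set S) x, 0 ≤ ⨆ y ∈ Γ', PL x y := fun Γ' x => hb_biSup_nonneg _ _ (PL0 x)
  have s1 : ∀ (Γ' : Set S) x, (⨆ y ∈ Γ', PL x y) ≤ 1 := fun Γ' x =>
    hb_biSup_le _ _ zero_le_one (fun y _ => PL1 x y)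
  have F0 : 0 ≤ maxFlux PL ρ (closure Γᶜ) (closure Γ) :=
    hb_biSup_nonneg _ _ (fun x => mul_nonneg (hρdev.1 x).1 (s0 _ x))
  have hF : ∀ x ∈ closure Γᶜ, ∀ y ∈ closure Γ,
      ρ x * PL x y ≤ maxFlux PL ρ (closure Γᶜ) (closure Γ) := by
    intro x hx y hy
    have l1 : PL x y ≤ ⨆ y ∈ closure Γ, PL x y := hb_le_biSup (PL x) _ (PL0 x) (PL1 x) hy
    have l2 : (ρ x * ⨆ y ∈ closure Γ, PL x y) ≤ maxFlux PL ρ (closure Γᶜ) (closure Γ) :=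
      hb_le_biSup (fun x => ρ x * ⨆ y ∈ closure Γ, PL x y) _
        (fun x => mul_nonneg (hρdev.1 x).1 (s0 _ x))
        (fun x => mul_le_one₀ (hρdev.1 x).2 (s0 _ x) (s1 _ x)) hx
    exact (mul_le_mul_of_nonneg_left l1 (hρdev.1 x).1).trans l2
  refine le_of_forall_gt_imp_ge_of_dense (fun G hG => ?_)
  have hG0 : 0 < G := lt_of_le_of_lt F0 hG
  have hA := stepA hyp hPL hρdev (C := closure Γᶜ) (D := closure Γ) isClosed_closure
    isClosed_closure hG0 (fun x hx y hy => lt_of_le_of_lt (hF x hx y hy) hG)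
  refine hb_biSup_le _ _ hG0.le (fun x hx => ?_)
  refine hb_mul_biSup_le _ _ (hρdev.1 x).1 hG0.le (fun y hy => ?_)
  refine le_of_tendsto ((hPL x y).const_mul (ρ x)) ?_
  filter_upwards [hA] with t ht
  by_contra hcon
  obtain ⟨G', hG', hG'2⟩ := exists_between (not_le.1 hcon)
  obtain ⟨c, hc, hc2⟩ := exists_between hG'2
  obtain ⟨M, hM⟩ := stepB hyp κ hκ P hP hκLD hρdev φ hφ hρ t isClosed_closure
    isClosed_closure hG0 hG' ht
  have hC := stepC hyp κ hκ P hP hκLD hρdev φ hφ hρ t isOpen_interior isOpen_interior hx hy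
    (hG0.trans (hG'.trans hc)).le hc2
  refine no_exp (hG0.trans hG') hc M hφ ?_
  filter_upwards [hM, hC] with k h1 h2
  calc ENNReal.ofReal (c ^ φ k)
      ≤ ∫⁻ x in interior Γ, κ (φ k) t x (interior Γᶜ) ∂(P (φ k)) := h2
    _ ≤ ∫⁻ x in Γ, κ (φ k) t x Γᶜ ∂(P (φ k)) :=
        (lintegral_mono_set interior_subset).trans
          (lintegral_mono fun z => measure_mono interior_subset)
    _ = ∫⁻ x in Γᶜ, κ (φ k) t x Γ ∂(P (φ k)) :=
        balance _ (hκ _ _) _ (hP _) hΓ (hinv _ _ _ hΓ)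
    _ ≤ ∫⁻ x in closure Γᶜ, κ (φ k) t x (closure Γ) ∂(P (φ k)) :=
        (lintegral_mono_set subset_closure).trans
          (lintegral_mono fun z => measure_mono subset_closure)
    _ ≤ _ := h1
end
end

section
/- Let {A',A''} be a nontrivial partition of A and Ã'' = {a'' ∈ A'' : ρ(a'') > ρ(a')·Π(a',a'') for all a' ∈ A'}. If Ã'' = ∅, then Φ_ρ(A'',A') = Φ_ρ(A',A'') = ρ(A'') = sup_{a∈A''} ρ(a). -/
open Filter Topology Metric Set MeasureTheory
open scoped NNReal

noncomputable section

variable {S : Type*} [MetricSpace S]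

variable [MeasurableSpace S] [BorelSpace S]

set_option linter.unusedSectionVars false

/-! ### Bounded suprema -/

lemma bs_le {ι : Type*} {Γ : Set ι} {f : ι → ℝ} {B : ℝ} (hB : 0 ≤ B)
    (h : ∀ x ∈ Γ, f x ≤ B) : (⨆ x ∈ Γ, f x) ≤ B :=
  Real.iSup_le (fun x => Real.iSup_le (h x) hB) hB

lemma le_bs {ι : Type*} {Γ : Set ι} {f : ι → ℝ} {B : ℝ}
    (h : ∀ x ∈ Γ, f x ≤ B) {x : ι} (hx : x ∈ Γ) : f x ≤ ⨆ x ∈ Γ, f x := by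
  have hb : BddAbove (Set.range fun x => ⨆ (_ : x ∈ Γ), f x) := by
    refine ⟨max B 0, ?_⟩
    rintro _ ⟨y, rfl⟩
    exact Real.iSup_le (fun hy => (h y hy).trans (le_max_left _ _)) (le_max_right _ _)
  have := le_ciSup hb x
  simpa [ciSup_pos hx] using this

lemma lt_bs {ι : Type*} {Γ : Set ι} {f : ι → ℝ} {b : ℝ} (hb : 0 ≤ b)
    (h : b < ⨆ x ∈ Γ, f x) : ∃ x ∈ Γ, b < f x := by
  by_contra! hcon
  exact absurd (bs_le hb hcon) (not_le.mpr h)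

lemma bs_nonneg {ι : Type*} {Γ : Set ι} {f : ι → ℝ}
    (h : ∀ x ∈ Γ, 0 ≤ f x) : 0 ≤ ⨆ x ∈ Γ, f x :=
  Real.iSup_nonneg fun x => Real.iSup_nonneg (h x)

/-! ### Paths -/

section paths
variable {Px : S → C(ℝ≥0, S) → ℝ} {A : Set S}

lemma Px_nonneg (hyp : DevSetup S Px A) (x : S) (X : C(ℝ≥0, S)) : 0 ≤ Px x X :=
  ((hyp.dev x).1 X).1

lemma Px_le_one (hyp : DevSetup S Px A) (x : S) (X : C(ℝ≥0, S)) : Px x X ≤ 1 :=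
  ((hyp.dev x).1 X).2

lemma T_nonneg (hyp : DevSetup S Px A) (x : S) (t : ℝ≥0) (y : S) : 0 ≤ transDen Px x t y :=
  bs_nonneg fun X _ => Px_nonneg hyp x X

lemma T_le_one (hyp : DevSetup S Px A) (x : S) (t : ℝ≥0) (y : S) : transDen Px x t y ≤ 1 :=
  bs_le zero_le_one fun X _ => Px_le_one hyp x X

lemma Px_le_T (hyp : DevSetup S Px A) (x : S) (X : C(ℝ≥0, S)) (t : ℝ≥0) :
    Px x X ≤ transDen Px x t (X t) :=
  le_bs (Γ := {X' : C(ℝ≥0, S) | X' t = X t}) (fun X _ => Px_le_one hyp x X) rfl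

/-- the restricted density -/
def restDen (Px : S → C(ℝ≥0, S) → ℝ) (x : S) (X : C(ℝ≥0, S)) (s : ℝ≥0) : ℝ :=
  ⨆ X' ∈ {X' : C(ℝ≥0, S) | ∀ u ≤ s, X' u = X u}, Px x X'

lemma restDen_le_T (hyp : DevSetup S Px A) (x : S) (X : C(ℝ≥0, S)) (s : ℝ≥0) :
    restDen Px x X s ≤ transDen Px x s (X s) := by
  refine bs_le (T_nonneg hyp _ _ _) fun X' hX' => ?_
  rw [← hX' s le_rfl]
  exact Px_le_T hyp x X' s

lemma restDen_nonneg (hyp : DevSetup S Px A) (x : S) (X : C(ℝ≥0, S)) (s : ℝ≥0) :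
    0 ≤ restDen Px x X s :=
  bs_nonneg fun X _ => Px_nonneg hyp x X

lemma restDen_le_one (hyp : DevSetup S Px A) (x : S) (X : C(ℝ≥0, S)) (s : ℝ≥0) :
    restDen Px x X s ≤ 1 :=
  bs_le zero_le_one fun X _ => Px_le_one hyp x X

lemma Px_le_mul (hyp : DevSetup S Px A) (x : S) (X : C(ℝ≥0, S)) {s t : ℝ≥0} (hst : s ≤ t) :
    Px x X ≤ transDen Px x s (X s) * transDen Px (X s) (t - s) (X t) := by
  rw [hyp.markov x X s]
  have h2 := Px_le_T hyp (X s) (pshift s X) (t - s)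
  have h3 : (pshift s X) (t - s) = X t := by
    show X (s + (t - s)) = X t
    rw [add_tsub_cancel_of_le hst]
  rw [h3] at h2
  exact mul_le_mul (restDen_le_T hyp x X s) h2 (Px_nonneg hyp _ _) (T_nonneg hyp _ _ _)

/-- concatenation of paths -/
def pconcat (s : ℝ≥0) (X Y : C(ℝ≥0, S)) (h : X s = Y 0) : C(ℝ≥0, S) :=
  ⟨fun t => if t ≤ s then X t else Y (t - s), by
    refine Continuous.if_le X.continuous (Y.continuous.comp (continuous_id.sub continuous_const))
      continuous_id continuous_const ?_
    rintro t rfl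
    simpa using h⟩

lemma T_semigroup (hyp : DevSetup S Px A) (x y z : S) (s t : ℝ≥0) :
    transDen Px x s y * transDen Px y t z ≤ transDen Px x (s + t) z := by
  have key : ∀ X : C(ℝ≥0, S), X s = y → ∀ Y : C(ℝ≥0, S), Y t = z →
      Px x X * Px y Y ≤ transDen Px x (s + t) z := by
    intro X hX Y hY
    by_cases h0 : Y 0 = y
    · have h : X s = Y 0 := by rw [hX, h0]
      have h1 := hyp.markov x (pconcat s X Y h) s
      have h2 : (pconcat s X Y h) s = y := by simp [pconcat, hX]
      have h3 : pshift s (pconcat s X Y h) = Y := by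
        ext u
        simp only [pshift, pconcat, ContinuousMap.coe_mk]
        split_ifs with hu
        · have : u = 0 := by simpa using hu
          subst this
          simpa using h
        · simp
      have h4 : (pconcat s X Y h) (s + t) = z := by
        have := congrArg (fun Z : C(ℝ≥0, S) => Z t) h3
        simp only [hY] at this
        exact this
      rw [h2, h3] at h1
      have h5 : Px x X ≤ ⨆ X' ∈ {X' : C(ℝ≥0, S) | ∀ u ≤ s, X' u = (pconcat s X Y h) u},
          Px x X' := by
        refine le_bs (fun X _ => Px_le_one hyp x X) ?_
        intro u hu
        simp [pconcat, hu]
      calc Px x X * Px y Y ≤ _ := mul_le_mul_of_nonneg_right h5 (Px_nonneg hyp _ _)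
        _ = Px x (pconcat s X Y h) := h1.symm
        _ ≤ _ := by
          have := Px_le_T hyp x (pconcat s X Y h) (s + t)
          rwa [h4] at this
    · rw [hyp.start y Y h0, mul_zero]
      exact T_nonneg hyp _ _ _
  by_contra! hcon
  have hT := T_nonneg hyp x (s + t) z
  have ha := T_nonneg hyp x s y
  have hb := T_nonneg hyp y t z
  have hbpos : 0 < transDen Px y t z := by
    rcases hb.eq_or_lt with h | h
    · rw [← h, mul_zero] at hcon; linarith
    · exact h
  obtain ⟨X, hX, hX1⟩ := lt_bs (div_nonneg hT hb) ((div_lt_iff₀ hbpos).mpr hcon)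
  have hXpos : 0 < Px x X := lt_of_le_of_lt (div_nonneg hT hb) hX1
  rw [div_lt_iff₀ hbpos, mul_comm, ← div_lt_iff₀ hXpos] at hX1
  obtain ⟨Y, hY, hY1⟩ := lt_bs (div_nonneg hT hXpos.le) hX1
  rw [div_lt_iff₀ hXpos, mul_comm] at hY1
  exact absurd (key X hX Y hY) (not_le.mpr hY1)

lemma T_self (hyp : DevSetup S Px A) {a : S} (ha : a ∈ A) (t : ℝ≥0) :
    transDen Px a t a = 1 := by
  refine le_antisymm (T_le_one hyp _ _ _) ?_
  have := Px_le_T hyp a (ContinuousMap.const ℝ≥0 a) t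
  rwa [hyp.equil a ha] at this

/-- the restricted densities decrease to the density -/
lemma restDen_lt (hyp : DevSetup S Px A) (x : S) (X : C(ℝ≥0, S)) {c : ℝ} (hc : Px x X < c) :
    ∀ᶠ s in atTop, restDen Px x X s < c := by
  obtain ⟨c', hc1, hc2⟩ := exists_between hc
  have hc0 : 0 ≤ c' := (Px_nonneg hyp x X).trans hc1.le
  by_contra hcon
  have h2 : ∀ s, ∃ X' : C(ℝ≥0, S), (∀ u ≤ s, X' u = X u) ∧
      (c ≤ restDen Px x X s → c' < Px x X') := by
    intro s
    by_cases h : c ≤ restDen Px x X s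
    · obtain ⟨X', h1, h2⟩ := lt_bs hc0 (lt_of_lt_of_le hc2 h)
      exact ⟨X', h1, fun _ => h2⟩
    · exact ⟨X, fun _ _ => rfl, fun h' => absurd h' h⟩
  choose F hF1 hF2 using h2
  have hF : Tendsto F atTop (𝓝 X) := by
    rw [ContinuousMap.tendsto_nhds_compactOpen]
    intro K hK U _ hm
    obtain ⟨b, hb⟩ := hK.bddAbove
    filter_upwards [eventually_ge_atTop b] with s hs u hu
    rw [hF1 s u ((hb hu).trans hs)]
    exact hm hu
  have hu := hyp.usc (x, X) c' hc1
  have hF' : Tendsto (fun s => (x, F s)) atTop (𝓝 (x, X)) := tendsto_const_nhds.prodMk_nhds hF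
  refine hcon ?_
  filter_upwards [hF'.eventually hu] with s hs
  by_contra! hs'
  exact absurd (hF2 s hs') (not_lt.mpr hs.le)

lemma usc_path (hyp : DevSetup S Px A) (Y : C(ℝ≥0, S)) {c : ℝ} (hc : Px (Y 0) Y < c) :
    ∀ᶠ Z in 𝓝 Y, Px (Z 0) Z < c := by
  have hu := hyp.usc (Y 0, Y) c hc
  have hcont : Tendsto (fun Z : C(ℝ≥0, S) => (Z 0, Z)) (𝓝 Y) (𝓝 (Y 0, Y)) :=
    ((continuous_eval_const 0).prodMk continuous_id).tendsto Y
  exact hcont.eventually hu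

lemma tail_compact (hyp : DevSetup S Px A) (x : S) {γ : ℝ} (hγ : 0 < γ) :
    ∃ K₂ : Set S, IsCompact K₂ ∧ ∀ᶠ s : ℝ≥0 in atTop, ∀ X : C(ℝ≥0, S), γ ≤ Px x X → X s ∈ K₂ := by
  obtain ⟨K₂, hK₂, hl⟩ := hyp.tight {x} isCompact_singleton γ hγ
  refine ⟨K₂, hK₂, ?_⟩
  have hb1 : ∀ (t : ℝ≥0) (x : S), (⨆ y ∈ K₂ᶜ, transDen Px x t y) ≤ 1 := fun t x =>
    bs_le zero_le_one fun y _ => T_le_one hyp _ _ _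
  have hbd : IsBoundedUnder (· ≤ ·) atTop
      (fun t : ℝ≥0 => ⨆ z ∈ ({x} : Set S), ⨆ y ∈ K₂ᶜ, transDen Px z t y) :=
    isBoundedUnder_of ⟨1, fun t => bs_le zero_le_one fun x _ => hb1 t x⟩
  filter_upwards [eventually_lt_of_limsup_lt hl hbd] with s hs X hX
  by_contra hcon
  have h1 : transDen Px x s (X s) ≤ ⨆ y ∈ K₂ᶜ, transDen Px x s y :=
    le_bs (Γ := K₂ᶜ) (fun y _ => T_le_one hyp x s y) hcon
  have h2 := le_bs (Γ := ({x} : Set S)) (f := fun x => ⨆ y ∈ K₂ᶜ, transDen Px x s y)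
    (fun x _ => hb1 s x) rfl
  have h3 := Px_le_T hyp x X s

  linarith

lemma no_avoid (hyp : DevSetup S Px A) (x : S) (X : C(ℝ≥0, S)) {δ : ℝ} (hδ : 0 < δ)
    (hpos : 0 < Px x X) (hav : ∀ s, δ ≤ infDist (X s) A) : False := by
  obtain ⟨K₂, hK₂, hev⟩ := tail_compact hyp x hpos
  have hmk : ∀ s, Px x X = restDen Px x X s * Px (X s) (pshift s X) := fun s => hyp.markov x X s
  have hge : ∀ s, Px x X ≤ Px (X s) (pshift s X) := by
    intro s
    rw [hmk s]
    exact mul_le_of_le_one_left (Px_nonneg hyp _ _) (restDen_le_one hyp _ _ _)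
  have hC := hyp.cpt K₂ hK₂ (Px x X) ⟨hpos, Px_le_one hyp x X⟩
  obtain ⟨Y, -, hY⟩ := hC.exists_mapClusterPt_of_frequently (l := (atTop : Filter ℝ≥0))
    (f := fun s => pshift s X) (by
      apply Eventually.frequently
      filter_upwards [hev] with s hs
      exact mem_iUnion₂.mpr ⟨X s, hs X le_rfl, hge s⟩)
  have h1 : Px (Y 0) Y = 1 := by
    refine le_antisymm (Px_le_one hyp _ _) ?_
    by_contra! hlt
    obtain ⟨c, hc1, hc2⟩ := exists_between hlt
    have hc0 : 0 < c := (Px_nonneg hyp _ _).trans_lt hc1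
    have hf := hY.frequently (usc_path hyp Y hc1)
    have hr := restDen_lt hyp x X (c := Px x X / c) (by rw [lt_div_iff₀ hc0]; nlinarith)
    obtain ⟨s, hs1, hs2⟩ := (hf.and_eventually hr).exists
    have hs1' : Px (X s) (pshift s X) < c := by
      have e : (pshift s X) 0 = X s := by simp [pshift]
      rwa [e] at hs1
    rw [lt_div_iff₀ hc0] at hs2
    have := hmk s
    nlinarith [restDen_nonneg hyp x X s]
  have h2 : ∀ t, δ ≤ infDist (Y t) A := by
    intro t
    by_contra! hlt
    have hcont : Continuous fun Z : C(ℝ≥0, S) => infDist (Z t) A :=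
      (continuous_infDist_pt A).comp (continuous_eval_const t)
    obtain ⟨s, hs⟩ := (hY.frequently (hcont.continuousAt.eventually_lt_const hlt)).exists
    exact absurd (hav (s + t)) (not_le.mpr hs)
  have h3 := hyp.attract _ Y h1
  have : δ ≤ ⨅ t : ℝ≥0, infDist (Y t) A := le_ciInf h2
  linarith

lemma hitting (hyp : DevSetup S Px A) {K : Set S} (hK : IsCompact K) {γ δ : ℝ} (hγ : 0 < γ)
    (hδ : 0 < δ) : ∃ t₀ : ℝ≥0, ∀ x ∈ K, ∀ X, γ ≤ Px x X → ∃ s ≤ t₀, infDist (X s) A < δ := by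
  by_cases hγ1 : γ ≤ 1
  swap
  · refine ⟨0, fun x _ X h => absurd (h.trans (Px_le_one hyp x X)) hγ1⟩
  have hC := hyp.cpt K hK γ ⟨hγ, hγ1⟩
  have hcl : ∀ t : ℝ≥0, IsClosed {X : C(ℝ≥0, S) | ∀ s ≤ t, δ ≤ infDist (X s) A} := by
    intro t
    have : {X : C(ℝ≥0, S) | ∀ s ≤ t, δ ≤ infDist (X s) A} =
        ⋂ s, ⋂ (_ : s ≤ t), {X : C(ℝ≥0, S) | δ ≤ infDist (X s) A} := by
      ext X; simp
    rw [this]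
    refine isClosed_iInter fun s => isClosed_iInter fun _ => isClosed_le continuous_const ?_
    exact (continuous_infDist_pt A).comp (continuous_eval_const s)
  obtain ⟨t, ht⟩ := hC.elim_directed_family_closed _ hcl (by
    rw [eq_empty_iff_forall_notMem]
    rintro X ⟨hX1, hX2⟩
    obtain ⟨x, hx, hX⟩ := mem_iUnion₂.mp hX1
    exact no_avoid hyp x X hδ (lt_of_lt_of_le hγ hX)
      fun s => (mem_iInter.mp hX2 s) s le_rfl) (by
    apply directed_of_isDirected_le
    intro t t' htt X hX s hs
    exact hX s (hs.trans htt))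
  refine ⟨t, fun x hx X hX => ?_⟩
  by_contra! hcon
  exact (eq_empty_iff_forall_notMem.mp ht) X ⟨mem_iUnion₂.mpr ⟨x, hx, hX⟩, hcon⟩

lemma exists_Px_one (hyp : DevSetup S Px A) (x : S) : ∃ X, Px x X = 1 := by
  have hd := hyp.dev x
  have hne : Nonempty C(ℝ≥0, S) := ⟨ContinuousMap.const _ x⟩
  obtain ⟨X₁, hX₁⟩ := exists_lt_of_lt_ciSup (show (1/2 : ℝ) < ⨆ X, Px x X by rw [hd.2.1]; norm_num)
  have husc : UpperSemicontinuousOn (Px x) {X | 1/2 ≤ Px x X} := by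
    intro X _ c hc
    have hu := hyp.usc (x, X) c hc
    have hF' : Tendsto (fun Z => (x, Z)) (𝓝 X) (𝓝 (x, X)) :=
      tendsto_const_nhds.prodMk_nhds tendsto_id
    exact (hF'.eventually hu).filter_mono nhdsWithin_le_nhds
  obtain ⟨X, hX, hmax⟩ := UpperSemicontinuousOn.exists_isMaxOn ⟨X₁, hX₁.le⟩
    (hd.2.2 (1/2) ⟨by norm_num, by norm_num⟩) husc
  refine ⟨X, le_antisymm (Px_le_one hyp x X) ?_⟩
  rw [← hd.2.1]
  refine ciSup_le fun Z => ?_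
  by_cases hZ : 1/2 ≤ Px x Z
  · exact hmax hZ
  · exact (not_le.mp hZ).le.trans hX

end paths

/-! ### Large deviation bounds -/

lemma joint_tendsto {F : ℕ → S → ℝ} {x : S} {L : ℝ}
    (h : ∀ xs : ℕ → S, Tendsto xs atTop (𝓝 x) → Tendsto (fun n => F n (xs n)) atTop (𝓝 L)) :
    Tendsto (fun p : ℕ × S => F p.1 p.2) (atTop ×ˢ 𝓝 x) (𝓝 L) := by
  refine tendsto_of_seq_tendsto fun u hu => ?_
  refine tendsto_of_subseq_tendsto fun ns hns => ?_
  have hu' := hu.comp hns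
  have h1 : Tendsto (fun k => (u (ns k)).1) atTop atTop := tendsto_fst.comp hu'
  have h2 : Tendsto (fun k => (u (ns k)).2) atTop (𝓝 x) := tendsto_snd.comp hu'
  obtain ⟨ψ, hψ, hm⟩ := strictMono_subseq_of_tendsto_atTop h1
  refine ⟨ψ, ?_⟩
  set m : ℕ → ℕ := fun j => (u (ns (ψ j))).1 with hmdef
  have hm' : StrictMono m := hm
  set xs : ℕ → S := Function.extend m (fun j => (u (ns (ψ j))).2) (fun _ => x) with hxs
  have hx : Tendsto xs atTop (𝓝 x) := by
    rw [tendsto_def]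
    intro U hU
    have h3 := (h2.comp hψ.tendsto_atTop).eventually hU
    obtain ⟨J, hJ⟩ := eventually_atTop.mp h3
    refine mem_atTop_sets.mpr ⟨m J, fun n hn => ?_⟩
    show xs n ∈ U
    by_cases hex : ∃ j, m j = n
    · obtain ⟨j, rfl⟩ := hex
      rw [hxs, hm'.injective.extend_apply]
      exact hJ j (hm'.le_iff_le.mp hn)
    · rw [hxs, Function.extend_apply' _ _ _ hex]
      exact mem_of_mem_nhds hU
  have h4 := (h xs hx).comp hm'.tendsto_atTop
  refine h4.congr fun j => ?_
  simp only [Function.comp_apply]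
  rw [hxs, hm'.injective.extend_apply]

lemma int_pow {Q : Measure S} [IsProbabilityMeasure Q] {f : S → ℝ} (hf : Continuous f)
    (h0 : ∀ x, 0 ≤ f x) (h1 : ∀ x, f x ≤ 1) (n : ℕ) : Integrable (fun x => f x ^ n) Q := by
  refine Integrable.of_bound (hf.pow n).measurable.aestronglyMeasurable 1 ?_
  refine Eventually.of_forall fun x => ?_
  rw [Real.norm_of_nonneg (pow_nonneg (h0 x) n)]
  exact pow_le_one₀ (h0 x) (h1 x)

lemma ofReal_le_meas {Q : Measure S} [IsProbabilityMeasure Q] {f : S → ℝ} (hf : Continuous f)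
    (h0 : ∀ x, 0 ≤ f x) (h1 : ∀ x, f x ≤ 1) {V : Set S} (hV : MeasurableSet V)
    (hfV : ∀ x ∉ V, f x = 0) {n : ℕ} (hn : 1 ≤ n) {b : ℝ} (hb : 0 ≤ b)
    (h : b < (∫ x, f x ^ n ∂Q) ^ ((n : ℝ)⁻¹)) : ENNReal.ofReal (b ^ n) ≤ Q V := by
  have hI : 0 ≤ ∫ x, f x ^ n ∂Q := integral_nonneg fun x => pow_nonneg (h0 x) n
  have h2 : b ^ n ≤ ∫ x, f x ^ n ∂Q := by
    calc b ^ n ≤ ((∫ x, f x ^ n ∂Q) ^ ((n : ℝ)⁻¹)) ^ n := pow_le_pow_left₀ hb h.le n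
      _ = _ := Real.rpow_inv_natCast_pow hI (by omega)
  have h3 : ∫ x, f x ^ n ∂Q ≤ Q.real V := by
    rw [← integral_indicator_one hV]
    refine integral_mono (int_pow hf h0 h1 n) ((integrable_const 1).indicator hV) fun x => ?_
    by_cases hx : x ∈ V
    · simp only [indicator_of_mem hx, Pi.one_apply]
      exact pow_le_one₀ (h0 x) (h1 x)
    · simp only [indicator_of_notMem hx, hfV x hx]
      rw [zero_pow (by omega)]
  rw [← ofReal_measureReal (measure_ne_top Q V)]
  exact ENNReal.ofReal_le_ofReal (h2.trans h3)

lemma meas_le_ofReal {Q : Measure S} [IsProbabilityMeasure Q] {f : S → ℝ} (hf : Continuous f)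
    (h0 : ∀ x, 0 ≤ f x) (h1 : ∀ x, f x ≤ 1) {V : Set S} (hV : MeasurableSet V)
    (hfV : ∀ x ∈ V, f x = 1) {n : ℕ} (hn : 1 ≤ n) {b : ℝ}
    (h : (∫ x, f x ^ n ∂Q) ^ ((n : ℝ)⁻¹) < b) : Q V ≤ ENNReal.ofReal (b ^ n) := by
  have hI : 0 ≤ ∫ x, f x ^ n ∂Q := integral_nonneg fun x => pow_nonneg (h0 x) n
  have h2 : ∫ x, f x ^ n ∂Q ≤ b ^ n := by
    calc _ = ((∫ x, f x ^ n ∂Q) ^ ((n : ℝ)⁻¹)) ^ n :=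
            (Real.rpow_inv_natCast_pow hI (by omega)).symm
      _ ≤ _ := pow_le_pow_left₀ (Real.rpow_nonneg hI _) h.le n
  have h3 : Q.real V ≤ ∫ x, f x ^ n ∂Q := by
    rw [← integral_indicator_one hV]
    refine integral_mono ((integrable_const 1).indicator hV) (int_pow hf h0 h1 n) fun x => ?_
    by_cases hx : x ∈ V
    · simp [indicator_of_mem hx, hfV x hx]
    · simp only [indicator_of_notMem hx]
      exact pow_nonneg (h0 x) n
  rw [← ofReal_measureReal (measure_ne_top Q V)]
  exact ENNReal.ofReal_le_ofReal (h3.trans h2)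

lemma exists_bump {C D : Set S} (hC : IsClosed C) (hD : IsClosed D) (hd : Disjoint C D) :
    ∃ f : S → ℝ, Continuous f ∧ (∀ x, 0 ≤ f x) ∧ (∀ x, f x ≤ 1) ∧ (∀ x ∈ C, f x = 0) ∧
      ∀ x ∈ D, f x = 1 := by
  obtain ⟨f, h0, h1, h2⟩ := exists_continuous_zero_one_of_isClosed hC hD hd
  exact ⟨f, f.continuous, fun x => (h2 x).1, fun x => (h2 x).2, h0, h1⟩

lemma le_sup_mul {f p : S → ℝ} (h0 : ∀ x, 0 ≤ f x) (h1 : ∀ x, f x ≤ 1)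
    (p0 : ∀ x, 0 ≤ p x) (p1 : ∀ x, p x ≤ 1) (y : S) : f y * p y ≤ ⨆ x, f x * p x :=
  le_ciSup (f := fun x => f x * p x)
    ⟨1, by rintro _ ⟨x, rfl⟩; exact mul_le_one₀ (h1 x) (p0 x) (p1 x)⟩ y

lemma bdd_one {f : S → ℝ} (h1 : ∀ x, f x ≤ 1) : BddAbove (Set.range f) :=
  ⟨1, by rintro _ ⟨x, rfl⟩; exact h1 x⟩

lemma dens_usc {ρ : S → ℝ} (hρ : IsDeviabilityDensity ρ) (x : S) {c : ℝ} (hc : ρ x < c) :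
    ∀ᶠ z in 𝓝 x, ρ z < c := by
  have h0 := hρ.1 x
  by_cases hc1 : c ≤ 1
  · have hcl := (hρ.2.2 c ⟨lt_of_le_of_lt h0.1 hc, hc1⟩).isClosed
    filter_upwards [hcl.isOpen_compl.mem_nhds (show x ∈ {x | c ≤ ρ x}ᶜ by simpa using hc)] with z hz
    simpa using hz
  · exact Eventually.of_forall fun z => lt_of_le_of_lt (hρ.1 z).2 (not_le.mp hc1)

section ld
variable {Px : S → C(ℝ≥0, S) → ℝ} {A : Set S}
  {κ : ℕ → ℝ≥0 → ProbabilityTheory.Kernel S S} {P : ℕ → Measure S} {ρ : S → ℝ} {φ : ℕ → ℕ}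

/-- upper bound for the `P` measures of small neighbourhoods -/
lemma P_upper (hP : ∀ n, IsProbabilityMeasure (P n))
    (hφ : StrictMono φ) (hρ : LDConv (fun k => P (φ k)) φ ρ)
    {C D : Set S} (hC : IsClosed C) (hD : IsClosed D) (hd : Disjoint C D) {m b : ℝ} (hm : 0 ≤ m)
    (hmb : m < b) (hρ0 : ∀ x, 0 ≤ ρ x) (hle : ∀ x ∉ C, ρ x ≤ m) :
    ∀ᶠ k in atTop, P (φ k) D ≤ ENNReal.ofReal (b ^ φ k) := by
  obtain ⟨f, hf, h0, h1, hfC, hfD⟩ := exists_bump hC hD hd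
  have hs : (⨆ x, f x * ρ x) < b := by
    refine lt_of_le_of_lt (Real.iSup_le (fun x => ?_) hm) hmb
    by_cases hx : x ∈ C
    · rw [hfC x hx, zero_mul]; exact hm
    · exact (mul_le_of_le_one_left (hρ0 x) (h1 x)).trans (hle x hx)
  have := (hρ f hf h0 (bdd_one h1)).eventually_lt_const hs
  filter_upwards [this, hφ.tendsto_atTop.eventually_ge_atTop 1] with k hk hk1
  exact meas_le_ofReal hf h0 h1 hD.measurableSet hfD hk1 hk

lemma ld_lower (hyp : DevSetup S Px A)
    (hκ : ∀ n t, ProbabilityTheory.IsMarkovKernel (κ n t))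
    (hP : ∀ n, IsProbabilityMeasure (P n))
    (hκLD : ∀ (t : ℝ≥0) (x : S) (xs : ℕ → S), Tendsto xs atTop (𝓝 x) →
      LDConv (fun n => κ n t (xs n)) (fun n => n) (fun y => transDen Px x t y))
    (hρdev : IsDeviabilityDensity ρ)
    (hφ : StrictMono φ) (hρ : LDConv (fun k => P (φ k)) φ ρ)
    {x y : S} {t : ℝ≥0} {c : ℝ} (hc0 : 0 ≤ c) (hc : c < ρ x * transDen Px x t y)
    {U V : Set S} (hU : IsOpen U) (hxU : x ∈ U) (hV : IsOpen V) (hyV : y ∈ V) :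
    ∀ᶠ k in atTop, ENNReal.ofReal (c ^ φ k) ≤ ∫⁻ z in U, κ (φ k) t z V ∂(P (φ k)) := by
  have hρx := (hρdev.1 x).1
  have hT := T_nonneg hyp x t y
  have hpos : 0 < ρ x * transDen Px x t y := lt_of_le_of_lt hc0 hc
  have hρpos : 0 < ρ x := pos_of_mul_pos_left hpos hT
  have hTpos : 0 < transDen Px x t y := pos_of_mul_pos_right hpos hρx
  obtain ⟨a, b, ha0, hb0, ha, hb, hab⟩ : ∃ a b : ℝ, 0 ≤ a ∧ 0 ≤ b ∧ a < ρ x ∧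
      b < transDen Px x t y ∧ c ≤ a * b := by
    have hcont : ContinuousAt (fun e : ℝ => (ρ x - e) * (transDen Px x t y - e)) 0 := by fun_prop
    have h1 : ∀ᶠ e in 𝓝 (0:ℝ), c < (ρ x - e) * (transDen Px x t y - e) :=
      hcont.eventually_const_lt (by simpa using hc)
    have h2 : ∀ᶠ e in 𝓝[>] (0:ℝ), 0 < e ∧ e < ρ x ∧ e < transDen Px x t y ∧
        c < (ρ x - e) * (transDen Px x t y - e) := by
      filter_upwards [self_mem_nhdsWithin, nhdsWithin_le_nhds (eventually_lt_nhds hρpos),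
        nhdsWithin_le_nhds (eventually_lt_nhds hTpos), nhdsWithin_le_nhds h1] with e h1 h2 h3 h4
      exact ⟨h1, h2, h3, h4⟩
    obtain ⟨e, he0, he1, he2, he3⟩ := h2.exists
    exact ⟨_, _, by linarith, by linarith, by linarith, by linarith, he3.le⟩
  obtain ⟨f, hf, f0, f1, hfC, hfD⟩ := exists_bump (S := S) hV.isClosed_compl
    (isClosed_singleton (x := y)) (by simpa using hyV)
  have hj := joint_tendsto (F := fun n z => (∫ w, f w ^ n ∂(κ n t z)) ^ ((n : ℝ)⁻¹)) (x := x)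
    (L := ⨆ w, f w * transDen Px x t w) (fun xs hxs => hκLD t x xs hxs f hf f0 (bdd_one f1))
  have hbs : b < ⨆ w, f w * transDen Px x t w := by
    refine lt_of_lt_of_le hb ?_
    have := le_sup_mul f0 f1 (T_nonneg hyp x t) (T_le_one hyp x t) y
    rwa [hfD y rfl, one_mul] at this
  obtain ⟨pn, hpn, pz, hpz, hprod⟩ := eventually_prod_iff.mp (hj.eventually_const_lt hbs)
  obtain ⟨W₁, hW₁, hW₁o, hxW₁⟩ := _root_.mem_nhds_iff.mp hpz
  set W := U ∩ W₁ with hWdef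
  have hW : IsOpen W := hU.inter hW₁o
  obtain ⟨g, hg, g0, g1, hgC, hgD⟩ := exists_bump (S := S) hW.isClosed_compl
    (isClosed_singleton (x := x)) (by simpa using ⟨hxU, hxW₁⟩)
  have has : a < ⨆ w, g w * ρ w := by
    refine lt_of_lt_of_le ha ?_
    have := le_sup_mul g0 g1 (fun x => (hρdev.1 x).1) (fun x => (hρdev.1 x).2) x
    rwa [hgD x rfl, one_mul] at this
  have hgev := (hρ g hg g0 (bdd_one g1)).eventually_const_lt has
  filter_upwards [hgev, hφ.tendsto_atTop.eventually_ge_atTop 1, hφ.tendsto_atTop.eventually hpn]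
    with k hk hk1 hkn
  have e1 : ENNReal.ofReal (a ^ φ k) ≤ P (φ k) W :=
    ofReal_le_meas hg g0 g1 hW.measurableSet (fun x hx => hgC x hx) hk1 ha0 hk
  have e2 : ∀ z ∈ W, ENNReal.ofReal (b ^ φ k) ≤ κ (φ k) t z V := fun z hz =>
    ofReal_le_meas hf f0 f1 hV.measurableSet (fun x hx => hfC x hx) hk1 hb0
      (hprod hkn (hW₁ hz.2))
  calc ENNReal.ofReal (c ^ φ k) ≤ ENNReal.ofReal (b ^ φ k * a ^ φ k) := by
        apply ENNReal.ofReal_le_ofReal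
        rw [← mul_pow, mul_comm b a]
        exact pow_le_pow_left₀ hc0 hab _
    _ = ENNReal.ofReal (b ^ φ k) * ENNReal.ofReal (a ^ φ k) :=
        ENNReal.ofReal_mul (pow_nonneg hb0 _)
    _ ≤ ENNReal.ofReal (b ^ φ k) * P (φ k) W := by gcongr
    _ = ∫⁻ z in W, ENNReal.ofReal (b ^ φ k) ∂(P (φ k)) := by rw [setLIntegral_const]
    _ ≤ ∫⁻ z in W, κ (φ k) t z V ∂(P (φ k)) := setLIntegral_mono' hW.measurableSet e2
    _ ≤ ∫⁻ z in U, κ (φ k) t z V ∂(P (φ k)) := lintegral_mono_set inter_subset_left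

lemma pow_dom {c m : ℝ} (hm : 0 < m) (hmc : m < c) (C : ℕ) (hφ : StrictMono φ) :
    ∀ᶠ k in atTop, (C : ENNReal) * ENNReal.ofReal (m ^ φ k) < ENNReal.ofReal (c ^ φ k) := by
  have h1 : Tendsto (fun k => (c / m) ^ φ k) atTop atTop :=
    (tendsto_pow_atTop_atTop_of_one_lt ((one_lt_div hm).mpr hmc)).comp hφ.tendsto_atTop
  filter_upwards [h1.eventually_gt_atTop (C : ℝ)] with k hk
  rw [div_pow, lt_div_iff₀ (pow_pos hm _)] at hk
  rw [← ENNReal.ofReal_natCast, ← ENNReal.ofReal_mul (Nat.cast_nonneg C)]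
  exact (ENNReal.ofReal_lt_ofReal_iff (pow_pos (hm.trans hmc) _)).mpr hk

lemma rho_T_le (hyp : DevSetup S Px A)
    (hκ : ∀ n t, ProbabilityTheory.IsMarkovKernel (κ n t))
    (hP : ∀ n, IsProbabilityMeasure (P n))
    (hinv : ∀ n (t : ℝ≥0) (Γ : Set S), MeasurableSet Γ →
      P n Γ = ∫⁻ x, κ n t x Γ ∂(P n))
    (hκLD : ∀ (t : ℝ≥0) (x : S) (xs : ℕ → S), Tendsto xs atTop (𝓝 x) →
      LDConv (fun n => κ n t (xs n)) (fun n => n) (fun y => transDen Px x t y))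
    (hρdev : IsDeviabilityDensity ρ)
    (hφ : StrictMono φ) (hρ : LDConv (fun k => P (φ k)) φ ρ)
    (x y : S) (t : ℝ≥0) : ρ x * transDen Px x t y ≤ ρ y := by
  by_contra! hcon
  obtain ⟨m, hm1, hm2⟩ := exists_between hcon
  obtain ⟨b, hb1, hb2⟩ := exists_between hm2
  obtain ⟨c, hc1, hc2⟩ := exists_between hb2
  have hm0 : 0 < m := lt_of_le_of_lt (hρdev.1 y).1 hm1
  obtain ⟨r, hr0, hr⟩ := Metric.eventually_nhds_iff_ball.mp (dens_usc hρdev y hm1)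
  have hup := P_upper hP hφ hρ (C := (ball y r)ᶜ) (D := closedBall y (r/2))
    isOpen_ball.isClosed_compl isClosed_closedBall
    (by
      rw [disjoint_compl_left_iff_subset]
      exact closedBall_subset_ball (by linarith)) hm0.le hb1 (fun x => (hρdev.1 x).1)
    (fun z hz => (hr z (by simpa using hz)).le)
  have hlow := ld_lower hyp hκ hP hκLD hρdev hφ hρ (hm0.trans (hb1.trans hc1)).le hc2
    isOpen_univ (mem_univ x) (isOpen_ball (x := y) (ε := r/2)) (mem_ball_self (by linarith))
  obtain ⟨k, ⟨hk1, hk2⟩, hk3⟩ :=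
    ((hup.and hlow).and (pow_dom (hm0.trans hb1) hc1 1 hφ)).exists
  rw [setLIntegral_univ, ← hinv _ _ _ isOpen_ball.measurableSet] at hk2
  have := (hk2.trans (measure_mono ball_subset_closedBall)).trans hk1
  rw [Nat.cast_one, one_mul] at hk3
  exact absurd this (not_le.mpr hk3)

/-- Upper bound for the flux out of `{u < β}`. -/
lemma ld_upper (hyp : DevSetup S Px A)
    (hκ : ∀ n t, ProbabilityTheory.IsMarkovKernel (κ n t))
    (hP : ∀ n, IsProbabilityMeasure (P n))
    (hκLD : ∀ (t : ℝ≥0) (x : S) (xs : ℕ → S), Tendsto xs atTop (𝓝 x) →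
      LDConv (fun n => κ n t (xs n)) (fun n => n) (fun y => transDen Px x t y))
    (hρdev : IsDeviabilityDensity ρ)
    (hφ : StrictMono φ) (hρ : LDConv (fun k => P (φ k)) φ ρ)
    {t : ℝ≥0} {m c : ℝ} (hm : m ∈ Set.Ioc (0:ℝ) 1) (hmc : m < c)
    {u : S → ℝ} (hu : Continuous u) {β η : ℝ} (hη : 0 < η)
    (hflux : ∀ x y, u x ≤ β → β - η ≤ u y → ρ x * transDen Px x t y ≤ m) :
    ∃ C : ℕ, ∀ᶠ k in atTop, ∫⁻ z in {z | u z < β}, κ (φ k) t z {z | u z < β}ᶜ ∂(P (φ k)) ≤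
      C * ENNReal.ofReal (c ^ φ k) := by
  have hρ0 : ∀ x, 0 ≤ ρ x := fun x => (hρdev.1 x).1
  have hc0 : 0 < c := hm.1.trans hmc
  set Γc : Set S := {z | u z < β}ᶜ with hΓc
  have hΓcc : IsClosed Γc := (isOpen_lt hu continuous_const).isClosed_compl
  set K := {x | m ≤ ρ x} with hKdef
  have hKc : IsCompact K := hρdev.2.2 m hm
  set Fc := {x | u x ≤ β} with hFc
  have hFcl : IsClosed Fc := isClosed_le hu continuous_const
  obtain ⟨f, hf, f0, f1, hfC, hfD⟩ := exists_bump (S := S) (C := {x | u x ≤ β - η}) (D := Γc)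
    (isClosed_le hu continuous_const) hΓcc (by
      rw [Set.disjoint_left]
      intro x hx hx'
      simp only [hΓc, mem_compl_iff, mem_ofPred_eq, not_lt] at hx hx'
      linarith)
  have hind : ∃ W : Set S, IsOpen W ∧ K ∩ Fc ⊆ W ∧ ∃ C : ℕ, ∀ᶠ k in atTop,
      ∫⁻ z in W, κ (φ k) t z Γc ∂(P (φ k)) ≤ C * ENNReal.ofReal (c ^ φ k) := by
    refine (hKc.inter_right hFcl).induction_on
      (p := fun s => ∃ W : Set S, IsOpen W ∧ s ⊆ W ∧ ∃ C : ℕ, ∀ᶠ k in atTop,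
        ∫⁻ z in W, κ (φ k) t z Γc ∂(P (φ k)) ≤ C * ENNReal.ofReal (c ^ φ k)) ?_ ?_ ?_ ?_
    · exact ⟨∅, isOpen_empty, Subset.rfl, 0, by simp⟩
    · rintro s s' hss ⟨W, hW, hsW, h⟩
      exact ⟨W, hW, hss.trans hsW, h⟩
    · rintro s s' ⟨W, hW, hsW, C, h⟩ ⟨W', hW', hsW', C', h'⟩
      refine ⟨W ∪ W', hW.union hW', union_subset_union hsW hsW', C + C', ?_⟩
      filter_upwards [h, h'] with k hk hk'
      refine (lintegral_union_le _ _ _).trans ?_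
      rw [Nat.cast_add, add_mul]
      exact add_le_add hk hk'
    · rintro x ⟨hxK, hxF⟩
      set σ := ⨆ w, f w * transDen Px x t w with hσ
      have hσ0 : 0 ≤ σ := Real.iSup_nonneg fun w => mul_nonneg (f0 w) (T_nonneg hyp _ _ _)
      have hρσ : ρ x * σ < c := by
        refine lt_of_le_of_lt ?_ hmc
        rw [hσ, Real.mul_iSup_of_nonneg (hρ0 x)]
        refine Real.iSup_le (fun w => ?_) hm.1.le
        by_cases hw : u w ≤ β - η
        · rw [hfC w hw]; simpa using hm.1.le
        · refine le_trans ?_ (hflux x w hxF (not_le.mp hw).le)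
          exact mul_le_mul_of_nonneg_left
            (mul_le_of_le_one_left (T_nonneg hyp _ _ _) (f1 w)) (hρ0 x)
      obtain ⟨e, he0, he⟩ : ∃ e > 0, (ρ x + 2 * e) * (σ + e) < c := by
        have hcont : ContinuousAt (fun e : ℝ => (ρ x + 2 * e) * (σ + e)) 0 := by fun_prop
        have h1 : ∀ᶠ e in 𝓝 (0:ℝ), (ρ x + 2 * e) * (σ + e) < c :=
          hcont.eventually_lt_const (by simpa using hρσ)
        have h2 : ∀ᶠ e in 𝓝[>] (0:ℝ), 0 < e ∧ (ρ x + 2 * e) * (σ + e) < c := by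
          filter_upwards [self_mem_nhdsWithin, nhdsWithin_le_nhds h1] with e h1 h2
          exact ⟨h1, h2⟩
        exact h2.exists
      have hj := joint_tendsto (F := fun n z => (∫ w, f w ^ n ∂(κ n t z)) ^ ((n : ℝ)⁻¹)) (x := x)
        (L := σ) (fun xs hxs => hκLD t x xs hxs f hf f0 (bdd_one f1))
      obtain ⟨pn, hpn, pz, hpz, hprod⟩ := eventually_prod_iff.mp
        (hj.eventually_lt_const (show σ < σ + e by linarith))
      obtain ⟨r, hr0, hr⟩ := Metric.eventually_nhds_iff_ball.mp
        (hpz.and (dens_usc hρdev x (show ρ x < ρ x + e by linarith)))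
      have hup := P_upper hP hφ hρ (C := (ball x r)ᶜ) (D := closedBall x (r/2))
        (m := ρ x + e) (b := ρ x + 2 * e)
        isOpen_ball.isClosed_compl isClosed_closedBall
        (by
          rw [disjoint_compl_left_iff_subset]
          exact closedBall_subset_ball (by linarith)) (by linarith [hρ0 x]) (by linarith) hρ0
        (fun z hz => (hr z (by simpa using hz)).2.le)
      refine ⟨ball x (r/2), mem_nhdsWithin_of_mem_nhds (ball_mem_nhds x (by linarith)),
        ball x (r/2), isOpen_ball, Subset.rfl, 1, ?_⟩
      filter_upwards [hup, hφ.tendsto_atTop.eventually_ge_atTop 1,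
        hφ.tendsto_atTop.eventually hpn] with k hk hk1 hkn
      have e2 : ∀ z ∈ ball x (r/2), κ (φ k) t z Γc ≤ ENNReal.ofReal ((σ + e) ^ φ k) := fun z hz =>
        meas_le_ofReal hf f0 f1 hΓcc.measurableSet hfD hk1
          (hprod hkn (hr z (ball_subset_ball (by linarith) hz)).1)
      calc ∫⁻ z in ball x (r/2), κ (φ k) t z Γc ∂(P (φ k))
          ≤ ∫⁻ z in ball x (r/2), ENNReal.ofReal ((σ + e) ^ φ k) ∂(P (φ k)) :=
            setLIntegral_mono' isOpen_ball.measurableSet e2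
        _ = ENNReal.ofReal ((σ + e) ^ φ k) * P (φ k) (ball x (r/2)) := setLIntegral_const _ _
        _ ≤ ENNReal.ofReal ((σ + e) ^ φ k) * ENNReal.ofReal ((ρ x + 2 * e) ^ φ k) := by
            gcongr
            exact (measure_mono ball_subset_closedBall).trans hk
        _ = ENNReal.ofReal (((σ + e) * (ρ x + 2 * e)) ^ φ k) := by
            rw [← ENNReal.ofReal_mul (by positivity), mul_pow]
        _ ≤ ENNReal.ofReal (c ^ φ k) := by
            apply ENNReal.ofReal_le_ofReal
            have := hρ0 x
            refine pow_le_pow_left₀ (by positivity) ?_ _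
            rw [mul_comm]; exact he.le
        _ = ((1 : ℕ) : ENNReal) * ENNReal.ofReal (c ^ φ k) := by simp
  obtain ⟨W, hW, hsub, C, hC⟩ := hind
  have hup := P_upper hP hφ hρ (C := K) (D := Fc \ W) hKc.isClosed
    (hFcl.sdiff hW) (by
      rw [Set.disjoint_left]
      intro x hx hx'
      exact hx'.2 (hsub ⟨hx, hx'.1⟩)) hm.1.le hmc hρ0
    (fun z hz => (not_le.mp hz).le)
  refine ⟨C + 1, ?_⟩
  filter_upwards [hC, hup] with k hk hk'
  calc ∫⁻ z in {z | u z < β}, κ (φ k) t z Γc ∂(P (φ k))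
      ≤ ∫⁻ z in W ∪ (Fc \ W), κ (φ k) t z Γc ∂(P (φ k)) := by
        apply lintegral_mono_set
        intro z hz
        by_cases hzW : z ∈ W
        · exact Or.inl hzW
        · exact Or.inr ⟨show u z ≤ β from le_of_lt (show u z < β from hz), hzW⟩
    _ ≤ _ := lintegral_union_le _ _ _
    _ ≤ C * ENNReal.ofReal (c ^ φ k) + ENNReal.ofReal (c ^ φ k) := by
        refine add_le_add hk ?_
        calc ∫⁻ z in Fc \ W, κ (φ k) t z Γc ∂(P (φ k))
            ≤ ∫⁻ z in Fc \ W, 1 ∂(P (φ k)) := lintegral_mono fun z => prob_le_one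
          _ = P (φ k) (Fc \ W) := by simp
          _ ≤ _ := hk'
    _ = _ := by rw [Nat.cast_add, Nat.cast_one, add_mul, one_mul]

lemma flux_balance (Q : Measure S) [IsProbabilityMeasure Q] (k : ProbabilityTheory.Kernel S S)
    [ProbabilityTheory.IsMarkovKernel k]
    (hinv : ∀ Γ : Set S, MeasurableSet Γ → Q Γ = ∫⁻ x, k x Γ ∂Q) {Γ : Set S}
    (hΓ : MeasurableSet Γ) :
    ∫⁻ z in Γᶜ, k z Γ ∂Q = ∫⁻ z in Γ, k z Γᶜ ∂Q := by
  have h1 : Q Γ = ∫⁻ z in Γ, k z Γ ∂Q + ∫⁻ z in Γᶜ, k z Γ ∂Q := by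
    rw [lintegral_add_compl _ hΓ, ← hinv Γ hΓ]
  have h2 : Q Γ = ∫⁻ z in Γ, k z Γ ∂Q + ∫⁻ z in Γ, k z Γᶜ ∂Q := by
    rw [← lintegral_add_left (k.measurable_coe hΓ)]
    simp only [measure_add_measure_compl hΓ, measure_univ]
    simp
  have hfin : ∫⁻ z in Γ, k z Γ ∂Q ≠ ⊤ := by
    intro htop
    rw [htop, top_add] at h1
    exact measure_ne_top Q Γ h1
  exact (ENNReal.add_right_inj hfin).mp (h1.symm.trans h2)

end ld

section limits
variable {Px : S → C(ℝ≥0, S) → ℝ} {A : Set S} {PL : S → S → ℝ}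

lemma PL_nonneg (hyp : DevSetup S Px A)
    (hPL : ∀ x y : S, Tendsto (fun t : ℝ≥0 => transDen Px x t y) atTop (𝓝 (PL x y))) (x y : S) :
    0 ≤ PL x y := ge_of_tendsto' (hPL x y) fun t => T_nonneg hyp x t y

lemma PL_le_one (hyp : DevSetup S Px A)
    (hPL : ∀ x y : S, Tendsto (fun t : ℝ≥0 => transDen Px x t y) atTop (𝓝 (PL x y))) (x y : S) :
    PL x y ≤ 1 := le_of_tendsto' (hPL x y) fun t => T_le_one hyp x t y

lemma T_mul_PL (hyp : DevSetup S Px A)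
    (hPL : ∀ x y : S, Tendsto (fun t : ℝ≥0 => transDen Px x t y) atTop (𝓝 (PL x y)))
    (x y z : S) (s : ℝ≥0) : transDen Px x s y * PL y z ≤ PL x z := by
  have h1 : Tendsto (fun t : ℝ≥0 => transDen Px x (s + t) z) atTop (𝓝 (PL x z)) :=
    (hPL x z).comp (tendsto_atTop_mono (fun t => le_add_self) tendsto_id)
  exact le_of_tendsto_of_tendsto' ((hPL y z).const_mul _) h1 fun t => T_semigroup hyp x y z s t

lemma PL_self (hyp : DevSetup S Px A)
    (hPL : ∀ x y : S, Tendsto (fun t : ℝ≥0 => transDen Px x t y) atTop (𝓝 (PL x y)))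
    {a : S} (ha : a ∈ A) : PL a a = 1 := by
  refine tendsto_nhds_unique (hPL a a) ?_
  simp only [T_self hyp ha]
  exact tendsto_const_nhds

lemma T_le_PL (hyp : DevSetup S Px A)
    (hPL : ∀ x y : S, Tendsto (fun t : ℝ≥0 => transDen Px x t y) atTop (𝓝 (PL x y)))
    {a : S} (ha : a ∈ A) (x : S) (s : ℝ≥0) : transDen Px x s a ≤ PL x a := by
  have := T_mul_PL hyp hPL x a a s
  rwa [PL_self hyp hPL ha, mul_one] at this

/-- density of reaching a set from a point -/
def toSet (PL : S → S → ℝ) (A' : Set S) (x : S) : ℝ := ⨆ y ∈ A', PL x y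

variable {A' : Set S}

lemma toSet_nonneg (hyp : DevSetup S Px A)
    (hPL : ∀ x y : S, Tendsto (fun t : ℝ≥0 => transDen Px x t y) atTop (𝓝 (PL x y))) (x : S) :
    0 ≤ toSet PL A' x := bs_nonneg fun y _ => PL_nonneg hyp hPL x y

lemma toSet_le_one (hyp : DevSetup S Px A)
    (hPL : ∀ x y : S, Tendsto (fun t : ℝ≥0 => transDen Px x t y) atTop (𝓝 (PL x y))) (x : S) :
    toSet PL A' x ≤ 1 := bs_le zero_le_one fun y _ => PL_le_one hyp hPL x y

lemma PL_le_toSet (hyp : DevSetup S Px A)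
    (hPL : ∀ x y : S, Tendsto (fun t : ℝ≥0 => transDen Px x t y) atTop (𝓝 (PL x y))) (x : S)
    {a : S} (ha : a ∈ A') : PL x a ≤ toSet PL A' x :=
  le_bs (f := fun y => PL x y) (fun y _ => PL_le_one hyp hPL x y) ha

lemma T_mul_toSet (hyp : DevSetup S Px A)
    (hPL : ∀ x y : S, Tendsto (fun t : ℝ≥0 => transDen Px x t y) atTop (𝓝 (PL x y)))
    (x y : S) (s : ℝ≥0) : transDen Px x s y * toSet PL A' y ≤ toSet PL A' x := by
  rcases (T_nonneg hyp x s y).eq_or_lt with h | h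
  · rw [← h, zero_mul]; exact toSet_nonneg hyp hPL x
  rw [mul_comm, ← le_div_iff₀ h]
  refine bs_le (div_nonneg (toSet_nonneg hyp hPL x) h.le) fun a ha => ?_
  rw [le_div_iff₀ h, mul_comm]
  exact (T_mul_PL hyp hPL x y a s).trans (PL_le_toSet hyp hPL x ha)

lemma toSet_continuous (hyp : DevSetup S Px A)
    (hPL : ∀ x y : S, Tendsto (fun t : ℝ≥0 => transDen Px x t y) atTop (𝓝 (PL x y))) :
    Continuous (toSet PL A') := by
  rw [Metric.continuous_iff]
  intro x ε hε
  obtain ⟨δ, hδ, t₀, t₁, h⟩ := hyp.localMove x (ε / 2) (by linarith)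
  refine ⟨δ, hδ, fun x' hx' => ?_⟩
  obtain ⟨h1, h2⟩ := h x' (by rwa [dist_comm])
  have a1 := T_mul_toSet (A' := A') hyp hPL x x' t₀
  have a2 := T_mul_toSet (A' := A') hyp hPL x' x t₁
  have b1 := toSet_nonneg (A' := A') hyp hPL x
  have b2 := toSet_nonneg (A' := A') hyp hPL x'
  have c1 := toSet_le_one (A' := A') hyp hPL x
  have c2 := toSet_le_one (A' := A') hyp hPL x'
  rw [Real.dist_eq, abs_lt]
  constructor <;> nlinarith

lemma rho_le_of_toSet_lt (hyp : DevSetup S Px A)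
    (hPL : ∀ x y : S, Tendsto (fun t : ℝ≥0 => transDen Px x t y) atTop (𝓝 (PL x y)))
    {ρ : S → ℝ} (hρdev : IsDeviabilityDensity ρ)
    (hI : ∀ x y t, ρ x * transDen Px x t y ≤ ρ y)
    {A'' : Set S} (huni : A' ∪ A'' = A) {x : S} (hx : toSet PL A' x < 1) :
    ρ x ≤ ⨆ a ∈ A'', ρ a := by
  obtain ⟨X, hX⟩ := exists_Px_one hyp x
  refine le_of_forall_pos_lt_add fun ε hε => ?_
  obtain ⟨δ, hδ, hn⟩ := hyp.nearA (min (ε / 2) (1 - toSet PL A' x))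
    (lt_min (by linarith) (by linarith))
  have hinf := hyp.attract x X hX
  obtain ⟨s, hs⟩ := exists_lt_of_ciInf_lt (show (⨅ t : ℝ≥0, infDist (X t) A) < δ by linarith)
  obtain ⟨s₀, -, -, -, a, ha, h1, -⟩ := hn (X s) hs
  have hT : transDen Px x s (X s) = 1 :=
    le_antisymm (T_le_one hyp _ _ _) (hX ▸ Px_le_T hyp x X s)
  have h2 := T_semigroup hyp x (X s) a s s₀
  rw [hT, one_mul] at h2
  have m1 := min_le_left (ε / 2) (1 - toSet PL A' x)
  have m2 := min_le_right (ε / 2) (1 - toSet PL A' x)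
  have hρx := hρdev.1 x
  rcases (huni ▸ ha : a ∈ A' ∪ A'') with ha' | ha''
  · have h3 := T_le_PL hyp hPL ha x (s + s₀)
    have h4 := PL_le_toSet hyp hPL x ha'
    linarith
  · have h3 := hI x a (s + s₀)
    have h4 : ρ a ≤ ⨆ a ∈ A'', ρ a := le_bs (fun a _ => (hρdev.1 a).2) ha''
    nlinarith [hρx.1, hρx.2]

/-- the estimate of the flux out over a long time -/
lemma flux_out (hyp : DevSetup S Px A)
    (hPL : ∀ x y : S, Tendsto (fun t : ℝ≥0 => transDen Px x t y) atTop (𝓝 (PL x y)))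
    {ρ : S → ℝ} (hρdev : IsDeviabilityDensity ρ)
    (hI : ∀ x y t, ρ x * transDen Px x t y ≤ ρ y)
    {A'' : Set S} (huni : A' ∪ A'' = A) {r c β m ε : ℝ}
    (hr : r = ⨆ a ∈ A'', ρ a) (hc : ∀ a ∈ A'', ρ a * toSet PL A' a ≤ c)
    (hβ1 : β < 1) (hβ0 : 0 < β) (hm : m ∈ Set.Ioc (0:ℝ) 1) (hε : 0 < ε) (hε1 : ε < 1)
    (hεβ : ε < β)
    (h1 : r * β < m * (1 - ε)) (h2 : c < m * (1 - ε) ^ 2 * (β - ε)) :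
    ∃ t₀ : ℝ≥0, ∀ t ≥ t₀, ∀ x y, toSet PL A' x ≤ β → β - ε ≤ toSet PL A' y →
      ρ x * transDen Px x t y ≤ m := by
  obtain ⟨δ, hδ, hn⟩ := hyp.nearA ε hε
  obtain ⟨t₀, ht₀⟩ := hitting hyp (hρdev.2.2 m hm) hm.1 hδ
  refine ⟨t₀, fun t ht x y hx hy => ?_⟩
  by_contra! hcon
  have hρx := hρdev.1 x
  have hρpos : 0 < ρ x := by
    rcases hρx.1.eq_or_lt with h | h
    · rw [← h, zero_mul] at hcon; linarith [hm.1]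
    · exact h
  rw [mul_comm, ← div_lt_iff₀ hρpos] at hcon
  obtain ⟨X, hXy, hX⟩ := lt_bs (div_nonneg hm.1.le hρpos.le) hcon
  rw [div_lt_iff₀ hρpos, mul_comm] at hX
  have hXy' : X t = y := hXy
  have p0 := Px_nonneg hyp x X
  have p1 := Px_le_one hyp x X
  obtain ⟨s, hs, hsA⟩ := ht₀ x (show m ≤ ρ x by nlinarith [hρx.2]) X (by nlinarith [hρx.2])
  obtain ⟨s₀, s₁, -, -, a, ha, e1, e2⟩ := hn (X s) hsA
  have hle := Px_le_mul hyp x X (hs.trans ht)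
  rw [hXy'] at hle
  set Ts := transDen Px x s (X s)
  set Tr := transDen Px (X s) (t - s) y
  have Ts0 : 0 ≤ Ts := T_nonneg hyp _ _ _
  have Tr0 : 0 ≤ Tr := T_nonneg hyp _ _ _
  have Tr1 : Tr ≤ 1 := T_le_one hyp _ _ _
  have hmT : m < ρ x * Ts * Tr := by
    have := mul_le_mul_of_nonneg_left hle hρx.1
    nlinarith
  have hρT0 : 0 ≤ ρ x * Ts := mul_nonneg hρx.1 Ts0
  have hmT1 : m < ρ x * Ts := by nlinarith
  have hxa := T_semigroup hyp x (X s) a s s₀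
  rcases (huni ▸ ha : a ∈ A' ∪ A'') with ha' | ha''
  · have hρr : ρ x ≤ r := by
      rw [hr]
      exact rho_le_of_toSet_lt hyp hPL hρdev hI huni (lt_of_le_of_lt hx hβ1)
    have h3 := (T_le_PL hyp hPL ha x (s + s₀)).trans (PL_le_toSet hyp hPL x ha')
    have h4 : Ts * (1 - ε) ≤ β :=
      (mul_le_mul_of_nonneg_left e1.le Ts0).trans (hxa.trans (h3.trans hx))
    have h5 : ρ x * (Ts * (1 - ε)) ≤ r * β :=
      mul_le_mul hρr h4 (mul_nonneg Ts0 (by linarith)) (hρx.1.trans hρr)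
    have h6 : m * (1 - ε) < ρ x * Ts * (1 - ε) := mul_lt_mul_of_pos_right hmT1 (by linarith)
    nlinarith
  · have h3 : ρ x * Ts * (1 - ε) ≤ ρ a := by
      refine le_trans ?_ (hI x a (s + s₀))
      rw [mul_assoc]
      exact mul_le_mul_of_nonneg_left
        ((mul_le_mul_of_nonneg_left e1.le Ts0).trans hxa) hρx.1
    have h4 : (1 - ε) * Tr * (β - ε) ≤ toSet PL A' a := by
      have i1 := T_semigroup hyp a (X s) y s₁ (t - s)
      have i2 := T_mul_toSet (A' := A') hyp hPL a y (s₁ + (t - s))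
      refine le_trans ?_ i2
      refine mul_le_mul (le_trans (mul_le_mul_of_nonneg_right e2.le Tr0) i1) hy (by linarith)
        (T_nonneg hyp _ _ _)
    have h5 : (ρ x * Ts * (1 - ε)) * ((1 - ε) * Tr * (β - ε)) ≤ c :=
      (mul_le_mul h3 h4 (mul_nonneg (mul_nonneg (by linarith) Tr0) (by linarith))
        (hρdev.1 a).1).trans (hc a ha'')
    have h6 : (ρ x * Ts * Tr) * ((1 - ε) ^ 2 * (β - ε)) ≤ c := by
      calc _ = (ρ x * Ts * (1 - ε)) * ((1 - ε) * Tr * (β - ε)) := by ring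
        _ ≤ c := h5
    have hq : 0 ≤ (1 - ε) ^ 2 * (β - ε) := mul_nonneg (sq_nonneg _) (by linarith)
    nlinarith [mul_le_mul_of_nonneg_right hmT.le hq]

end limits

theorem stmt13
    (Px : S → C(ℝ≥0, S) → ℝ) (A : Set S) (hyp : DevSetup S Px A)
    (PL : S → S → ℝ)
    (hPL : ∀ x y : S, Tendsto (fun t : ℝ≥0 => transDen Px x t y) atTop (𝓝 (PL x y)))
    (κ : ℕ → ℝ≥0 → ProbabilityTheory.Kernel S S)
    (hκ : ∀ n t, ProbabilityTheory.IsMarkovKernel (κ n t))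
    (P : ℕ → Measure S) (hP : ∀ n, IsProbabilityMeasure (P n))
    (hinv : ∀ n (t : ℝ≥0) (Γ : Set S), MeasurableSet Γ →
      P n Γ = ∫⁻ x, κ n t x Γ ∂(P n))
    (hκLD : ∀ (t : ℝ≥0) (x : S) (xs : ℕ → S), Tendsto xs atTop (𝓝 x) →
      LDConv (fun n => κ n t (xs n)) (fun n => n) (fun y => transDen Px x t y))
    (ρ : S → ℝ) (hρdev : IsDeviabilityDensity ρ)
    (φ : ℕ → ℕ) (hφ : StrictMono φ)
    (hρ : LDConv (fun k => P (φ k)) φ ρ)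
    (A' A'' : Set S) (hA'ne : A'.Nonempty) (hA''ne : A''.Nonempty)
    (hdisj : Disjoint A' A'') (huni : A' ∪ A'' = A)
    (hempty : {a ∈ A'' | ∀ a' ∈ A', ρ a' * PL a' a < ρ a} = ∅) :
    maxFlux PL ρ A'' A' = (⨆ a ∈ A'', ρ a) ∧
    maxFlux PL ρ A' A'' = (⨆ a ∈ A'', ρ a) := by
  have hsub' : A' ⊆ A := huni ▸ subset_union_left
  have hI : ∀ x y t, ρ x * transDen Px x t y ≤ ρ y :=
    rho_T_le hyp hκ hP hinv hκLD hρdev hφ hρ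
  have hIL : ∀ x y, ρ x * PL x y ≤ ρ y := fun x y =>
    le_of_tendsto' ((hPL x y).const_mul (ρ x)) fun t => hI x y t
  have hρ0 : ∀ x, 0 ≤ ρ x := fun x => (hρdev.1 x).1
  have hρ1 : ∀ x, ρ x ≤ 1 := fun x => (hρdev.1 x).2
  have hex : ∀ a ∈ A'', ∃ a' ∈ A', ρ a ≤ ρ a' * PL a' a := by
    intro a ha
    by_contra! hcon
    exact (eq_empty_iff_forall_notMem.mp hempty) a ⟨ha, hcon⟩
  have hmul1 : ∀ (B : Set S) (x : S), ρ x * toSet PL B x ≤ 1 := fun B x =>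
    mul_le_one₀ (hρ1 x) (toSet_nonneg hyp hPL x) (toSet_le_one hyp hPL x)
  set r : ℝ := ⨆ a ∈ A'', ρ a with hr
  have hr0 : 0 ≤ r := bs_nonneg fun a _ => hρ0 a
  have hle_r : ∀ a ∈ A'', ρ a ≤ r := fun a ha => le_bs (fun a _ => hρ1 a) ha
  have hr1 : r ≤ 1 := bs_le zero_le_one fun a _ => hρ1 a
  have hmf : ∀ B C : Set S, maxFlux PL ρ B C = ⨆ x ∈ B, ρ x * toSet PL C x := fun _ _ => rfl
  rw [hmf, hmf]
  constructor
  · set c : ℝ := ⨆ x ∈ A'', ρ x * toSet PL A' x with hcdef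
    have hc0 : 0 ≤ c := bs_nonneg fun a _ => mul_nonneg (hρ0 a) (toSet_nonneg hyp hPL a)
    have hc : ∀ a ∈ A'', ρ a * toSet PL A' a ≤ c := fun a ha =>
      le_bs (f := fun a => ρ a * toSet PL A' a) (fun a _ => hmul1 A' a) ha
    have hcr : c ≤ r := bs_le hr0 fun a ha =>
      (mul_le_of_le_one_right (hρ0 a) (toSet_le_one hyp hPL a)).trans (hle_r a ha)
    refine le_antisymm hcr ?_
    by_contra! hlt
    have hrpos : 0 < r := lt_of_le_of_lt hc0 hlt
    obtain ⟨β, hβ1, hβ2⟩ := exists_between ((div_lt_one hrpos).mpr hlt)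
    have hβ0 : 0 < β := lt_of_le_of_lt (div_nonneg hc0 hr0) hβ1
    rw [div_lt_iff₀ hrpos, mul_comm] at hβ1
    have hmax : max (r * β) (c / β) < r :=
      max_lt (by nlinarith) ((div_lt_iff₀ hβ0).mpr hβ1)
    obtain ⟨a'', ha'', hq⟩ := lt_bs (le_max_of_le_left (mul_nonneg hr0 hβ0.le)) hmax
    obtain ⟨m, hm1, hm2⟩ := exists_between hq
    obtain ⟨m₂, hm3, hm4⟩ := exists_between hm2
    obtain ⟨c', hm5, hm6⟩ := exists_between hm4
    have hmrβ : r * β < m := lt_of_le_of_lt (le_max_left _ _) hm1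
    have hmcβ : c < m * β := (div_lt_iff₀ hβ0).mp (lt_of_le_of_lt (le_max_right _ _) hm1)
    have hmpos : 0 < m := lt_of_le_of_lt (mul_nonneg hr0 hβ0.le) hmrβ
    have hm : m ∈ Set.Ioc (0:ℝ) 1 := ⟨hmpos, hm2.le.trans (hρ1 a'')⟩
    obtain ⟨ε, hε0, hε1, hεβ, h1, h2⟩ : ∃ ε : ℝ, 0 < ε ∧ ε < 1 ∧ ε < β ∧
        r * β < m * (1 - ε) ∧ c < m * (1 - ε) ^ 2 * (β - ε) := by
      have c1 : ContinuousAt (fun e : ℝ => m * (1 - e)) 0 := by fun_prop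
      have c2 : ContinuousAt (fun e : ℝ => m * (1 - e) ^ 2 * (β - e)) 0 := by fun_prop
      have hev : ∀ᶠ ε in 𝓝[>] (0:ℝ), 0 < ε ∧ ε < 1 ∧ ε < β ∧
          r * β < m * (1 - ε) ∧ c < m * (1 - ε) ^ 2 * (β - ε) := by
        filter_upwards [self_mem_nhdsWithin,
          nhdsWithin_le_nhds (eventually_lt_nhds (zero_lt_one (α := ℝ))),
          nhdsWithin_le_nhds (eventually_lt_nhds hβ0),
          nhdsWithin_le_nhds (c1.eventually_const_lt (by simpa using hmrβ)),
          nhdsWithin_le_nhds (c2.eventually_const_lt (by simpa using hmcβ))] with e h1 h2 h3 h4 h5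
        exact ⟨h1, h2, h3, h4, h5⟩
      exact hev.exists
    obtain ⟨t₀, ht₀⟩ := flux_out hyp hPL hρdev hI huni hr hc hβ2 hβ0 hm hε0 hε1 hεβ h1 h2
    obtain ⟨a', ha', hqa⟩ := hex a'' ha''
    have hev := ((hPL a' a'').const_mul (ρ a')).eventually_const_lt (lt_of_lt_of_le hm6 hqa)
    obtain ⟨t, htc, ht⟩ := (hev.and (eventually_ge_atTop t₀)).exists
    have hu : Continuous (toSet PL A') := toSet_continuous hyp hPL
    obtain ⟨C, hC⟩ := ld_upper hyp hκ hP hκLD hρdev hφ hρ hm hm3 hu hε0 (ht₀ t ht)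
    have hΓo : IsOpen {z | toSet PL A' z < β} := isOpen_lt hu continuous_const
    have hua' : β < toSet PL A' a' := by
      have := PL_le_toSet hyp hPL a' ha'
      rw [PL_self hyp hPL (hsub' ha')] at this
      linarith
    have hua'' : toSet PL A' a'' < β := by
      have e1 := hc a'' ha''
      by_contra! hcon
      have : m * β < ρ a'' * toSet PL A' a'' :=
        mul_lt_mul hm2 hcon hβ0 (hρ0 a'')
      linarith
    have hlow := ld_lower hyp hκ hP hκLD hρdev hφ hρ (hmpos.trans (hm3.trans hm5)).le htc
      (isOpen_lt continuous_const hu) hua' hΓo hua''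
    obtain ⟨k, ⟨hk1, hk2⟩, hk3⟩ :=
      ((hC.and hlow).and (pow_dom (hmpos.trans hm3) hm5 C hφ)).exists
    have hbal := flux_balance (P (φ k)) (κ (φ k) t) (fun Γ hΓ => hinv (φ k) t Γ hΓ)
      hΓo.measurableSet
    have hsub : {z | β < toSet PL A' z} ⊆ {z | toSet PL A' z < β}ᶜ := by
      intro z hz hz'
      exact lt_asymm (show β < toSet PL A' z from hz) hz'
    have := (hk2.trans (lintegral_mono_set hsub)).trans (hbal.le.trans hk1)
    exact absurd this (not_le.mpr hk3)
  · refine le_antisymm ?_ ?_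
    · refine bs_le hr0 fun x _ => ?_
      rcases (hρ0 x).eq_or_lt with h | h
      · rw [← h, zero_mul]; exact hr0
      rw [mul_comm, ← le_div_iff₀ h]
      refine bs_le (div_nonneg hr0 h.le) fun y hy => ?_
      rw [le_div_iff₀ h, mul_comm]
      exact (hIL x y).trans (hle_r y hy)
    · refine bs_le (bs_nonneg fun a _ => mul_nonneg (hρ0 a) (toSet_nonneg hyp hPL a))
        fun a ha => ?_
      obtain ⟨a', ha', h⟩ := hex a ha
      refine h.trans ?_
      refine le_trans ?_ (le_bs (f := fun x => ρ x * toSet PL A'' x)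
        (fun x _ => hmul1 A'' x) ha')
      exact mul_le_mul_of_nonneg_left (PL_le_toSet hyp hPL a' ha) (hρ0 a')
end
end
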